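/- arXiv:math/0703635 — 7 statements merged into one kernel-verified Lean document; each statement's English description precedes it below -/
import Mathlib

section
/- Let k be a field of characteristic zero and let b₁, b₂, b₃ be 2×2 matrices over k with trace zero. Define w = Σ_{σ∈S₃} ε(σ)·tr(b_{σ(1)} b_{σ(2)} b_{σ(3)}) and let V be the symmetric 3×3 matrix with entries V_{ij} = tr(b_i b_j). Then w² + 18·det(V) = 0. -/
open Matrix

/-!
Write a traceless matrix as `!![x, y; z, -x]`. In the coordinates `(x, y, z)` the trace form is
`2 x x' + y z' + z y'`, with Gram determinant `-2`, so `det V = -2 D ^ 2` where `D` is the `3 × 3`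
determinant of the coordinates of `b₁, b₂, b₃`. The alternating trilinear form `w` is a multiple of
`D`, namely `w = ± 6 D`. Hence `w ^ 2 = 36 D ^ 2 = -18 det V`.
-/

/-- A signed sum over `S₃` of a cyclically invariant function collapses to two terms, one for each
class of permutations modulo the cyclic group of order three. -/
theorem sum_sign_smul_of_cyclic {k : Type*} [CommRing k] (f : Fin 3 → Fin 3 → Fin 3 → k)
    (hf : ∀ i j l, f i j l = f j l i) :
    ∑ σ : Equiv.Perm (Fin 3), (Equiv.Perm.sign σ : ℤ) • f (σ 0) (σ 1) (σ 2)
      = 3 * (f 0 1 2 - f 0 2 1) := by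
  have huniv : (Finset.univ : Finset (Equiv.Perm (Fin 3))) =
      {1, Equiv.swap 0 1, Equiv.swap 0 2, Equiv.swap 1 2,
        Equiv.swap 0 1 * Equiv.swap 1 2, Equiv.swap 1 2 * Equiv.swap 0 1} := by decide
  rw [huniv]
  repeat rw [Finset.sum_insert (by decide)]
  rw [Finset.sum_singleton]
  simp [Equiv.Perm.sign_swap', Equiv.swap_apply_def]
  rw [hf 1 2 0, hf 2 0 1, hf 2 1 0, hf 1 0 2]
  ring

/-- For traceless 2×2 matrices `b₁, b₂, b₃` over a field of characteristic zero, letting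
`w = ∑_{σ ∈ S₃} ε(σ) tr(b_{σ(1)} b_{σ(2)} b_{σ(3)})` and `V` the symmetric 3×3 matrix with
`V i j = tr(bᵢ bⱼ)`, one has `w² + 18 det V = 0`. -/
theorem stmt_0 {k : Type*} [Field k] [CharZero k]
    (b : Fin 3 → Matrix (Fin 2) (Fin 2) k)
    (hb : ∀ i, Matrix.trace (b i) = 0)
    (w : k)
    (hw : w = ∑ σ : Equiv.Perm (Fin 3),
      (Equiv.Perm.sign σ : ℤ) • Matrix.trace (b (σ 0) * b (σ 1) * b (σ 2)))
    (V : Matrix (Fin 3) (Fin 3) k)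
    (hV : ∀ i j, V i j = Matrix.trace (b i * b j)) :
    w ^ 2 + 18 * V.det = 0 := by
  rw [sum_sign_smul_of_cyclic (fun i j l => Matrix.trace (b i * b j * b l))
    (fun i j l => (Matrix.trace_mul_cycle (b j) (b l) (b i)).symm)] at hw
  have h11 : ∀ i, b i 1 1 = -b i 0 0 := fun i => by
    have := hb i
    rw [Matrix.trace_fin_two] at this
    linear_combination this
  rw [hw, Matrix.det_fin_three]
  simp only [hV, Matrix.trace_fin_two, Matrix.mul_apply, Fin.sum_univ_two, h11]
  ring
end

section
/- Let k be an infinite field (e.g. of characteristic zero) and consider the polynomial ring k[λ₁, λ₂, v₁, v₂]. A polynomial P ∈ k[λ₁, λ₂, v₁, v₂] satisfies P(tλ₁, tλ₂, t⁻¹v₁, t⁻¹v₂) = P(λ₁, λ₂, v₁, v₂) for every t ∈ kˣ if and only if P belongs to the k-subalgebra generated by the four products λ₁v₁, λ₁v₂, λ₂v₁, λ₂v₂. -/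
/-!
The substitution by `t` multiplies the monomial with exponent `m` by
`t ^ (m 0 + m 1) * t⁻¹ ^ (m 2 + m 3)` (`coeff_scale`). Over an infinite field a power `t ^ a` that
agrees with `t ^ b` for all units `t` has `a = b` (`eq_of_forall_units_pow_eq`), so an invariant
polynomial involves only monomials of equal degree in the `λᵢ` and in the `vⱼ`. Each of those is a
product of factors `λᵢ vⱼ`, by pairing off one `λ` with one `v` at a time (`balanced_mem`).
Conversely the generators are invariant, and the substitution is an algebra homomorphism.
-/


open MvPolynomial

lemma coeff_scale {k : Type*} [Field k] (t : kˣ) (P : MvPolynomial (Fin 4) k) (m : Fin 4 →₀ ℕ) :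
    coeff m (MvPolynomial.aeval
        (fun i : Fin 4 => if (i : ℕ) < 2 then (t : k) • (MvPolynomial.X i : MvPolynomial (Fin 4) k)
          else ((t⁻¹ : kˣ) : k) • MvPolynomial.X i) P) =
      (t : k) ^ (m 0 + m 1) * ((t⁻¹ : kˣ) : k) ^ (m 2 + m 3) * coeff m P := by
  induction P using MvPolynomial.induction_on' with
  | add p q hp hq => simp only [map_add, coeff_add, hp, hq, mul_add]
  | monomial u a =>
    have h : MvPolynomial.aeval
        (fun i : Fin 4 => if (i : ℕ) < 2 then (t : k) • (MvPolynomial.X i : MvPolynomial (Fin 4) k)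
          else ((t⁻¹ : kˣ) : k) • MvPolynomial.X i) (monomial u a) =
        C ((t : k) ^ (u 0 + u 1) * ((t⁻¹ : kˣ) : k) ^ (u 2 + u 3)) * monomial u a := by
      rw [aeval_monomial, monomial_eq, Finsupp.prod_fintype _ _ (by simp),
        Finsupp.prod_fintype _ _ (by simp)]
      simp only [Fin.prod_univ_four, algebraMap_eq, smul_eq_C_mul, map_mul, map_pow]
      norm_num
      ring
    rw [h, coeff_C_mul, coeff_monomial]
    split_ifs with hu
    · rw [hu]
    · simp

lemma eq_of_forall_units_pow_eq {k : Type*} [Field k] [Infinite k] {a b : ℕ}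
    (h : ∀ t : kˣ, (t : k) ^ a = (t : k) ^ b) : a = b := by
  have key : (Polynomial.X ^ (a + 1) : Polynomial k) = Polynomial.X ^ (b + 1) := by
    -- The extra factor `X` makes the identity hold at `0` as well.
    refine Polynomial.funext fun x => ?_
    by_cases hx : x = 0
    · simp [hx]
    · simpa [pow_succ, hx] using h (Units.mk0 x hx)
  have := congrArg Polynomial.natDegree key
  simpa using this

lemma balanced_mem {k : Type*} [Field k] (S : Subalgebra k (MvPolynomial (Fin 4) k))
    (h02 : X 0 * X 2 ∈ S) (h03 : X 0 * X 3 ∈ S) (h12 : X 1 * X 2 ∈ S) (h13 : X 1 * X 3 ∈ S)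
    (a b c d : ℕ) (h : a + b = c + d) :
    (X 0 ^ a * X 1 ^ b * X 2 ^ c * X 3 ^ d : MvPolynomial (Fin 4) k) ∈ S := by
  induction hn : a + b generalizing a b c d with
  | zero =>
    obtain ⟨rfl, rfl, rfl, rfl⟩ : a = 0 ∧ b = 0 ∧ c = 0 ∧ d = 0 := by omega
    simpa using S.one_mem
  | succ n ih =>
    rcases a with _ | a
    · obtain ⟨b, rfl⟩ : ∃ b', b = b' + 1 := ⟨b - 1, by omega⟩
      rcases c with _ | c
      · obtain ⟨d, rfl⟩ : ∃ d', d = d' + 1 := ⟨d - 1, by omega⟩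
        convert S.mul_mem h13 (ih 0 b 0 d (by omega) (by omega)) using 1
        ring
      · convert S.mul_mem h12 (ih 0 b c d (by omega) (by omega)) using 1
        ring
    · rcases c with _ | c
      · obtain ⟨d, rfl⟩ : ∃ d', d = d' + 1 := ⟨d - 1, by omega⟩
        convert S.mul_mem h03 (ih a b 0 d (by omega) (by omega)) using 1
        ring
      · convert S.mul_mem h02 (ih a b c d (by omega) (by omega)) using 1
        ring

/-- First fundamental theorem for the 𝔾ₘ-action on `k[λ₁, λ₂, v₁, v₂]` scaling
`λᵢ ↦ t·λᵢ` and `vᵢ ↦ t⁻¹·vᵢ` (here `λ₁ = X 0`, `λ₂ = X 1`, `v₁ = X 2`, `v₂ = X 3`):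
a polynomial is invariant under this action for all `t ∈ kˣ` iff it lies in the
subalgebra generated by the four products `λᵢ vⱼ`. -/
theorem stmt_6 {k : Type*} [Field k] [Infinite k] (P : MvPolynomial (Fin 4) k) :
    (∀ t : kˣ, MvPolynomial.aeval
        (fun i : Fin 4 => if (i : ℕ) < 2 then (t : k) • (MvPolynomial.X i : MvPolynomial (Fin 4) k)
          else ((t⁻¹ : kˣ) : k) • MvPolynomial.X i) P = P)
    ↔ P ∈ Algebra.adjoin k
        ({MvPolynomial.X 0 * MvPolynomial.X 2, MvPolynomial.X 0 * MvPolynomial.X 3,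
          MvPolynomial.X 1 * MvPolynomial.X 2, MvPolynomial.X 1 * MvPolynomial.X 3} :
          Set (MvPolynomial (Fin 4) k)) := by
  constructor
  · intro h
    rw [P.as_sum]
    refine Subalgebra.sum_mem _ fun m hm => ?_
    have hm' : coeff m P ≠ 0 := mem_support_iff.mp hm
    have hdeg : m 0 + m 1 = m 2 + m 3 := by
      refine eq_of_forall_units_pow_eq (k := k) fun t => ?_
      have h1 := coeff_scale t P m
      rw [h t] at h1
      have h2 : (t : k) ^ (m 0 + m 1) * ((t⁻¹ : kˣ) : k) ^ (m 2 + m 3) = 1 :=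
        mul_right_cancel₀ hm' (by rw [← h1, one_mul])
      rw [Units.val_inv_eq_inv_val, inv_pow] at h2
      exact eq_of_mul_inv_eq_one h2
    rw [monomial_eq, Finsupp.prod_fintype _ _ (by simp), Fin.prod_univ_four]
    refine Subalgebra.mul_mem _ (Subalgebra.algebraMap_mem _ _) (balanced_mem _ ?_ ?_ ?_ ?_ _ _ _ _ hdeg)
    all_goals exact Algebra.subset_adjoin (by simp)
  · intro hP t
    induction hP using Algebra.adjoin_induction with
    | mem x hx =>
      rcases hx with rfl | rfl | rfl | rfl <;>
        simp [smul_smul]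
    | algebraMap r => simp
    | add x y _ _ hx hy => rw [map_add, hx, hy]
    | mul x y _ _ hx hy => rw [map_mul, hx, hy]
end

section
/- Let k be an infinite field of characteristic zero and consider the polynomial ring k[X₁₂, X₁₃, X₂₁, X₂₃, X₃₁, X₃₂]. A polynomial P is invariant under the torus action in which (t₁, t₂, t₃) ∈ (kˣ)³ acts by the substitution X_{ij} ↦ tᵢ⁻¹·tⱼ·X_{ij} (i.e. P is unchanged by this substitution for all t₁, t₂, t₃ ∈ kˣ) if and only if P belongs to the k-subalgebra generated by the five monomials Y₁ = X₂₃X₃₂, Y₂ = X₁₃X₃₁, Y₃ = X₁₂X₂₁, Y₄ = X₁₂X₂₃X₃₁ and Y₅ = X₁₃X₃₂X₂₁. -/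
/-! The torus acts on each monomial `X^m` by the character `∏ (tᵢ⁻¹ tⱼ) ^ m_{ij}`
(`coeff_aeval_smul_X`), so `P` is invariant iff every monomial in its support is. Taking `t` to be
`2` at one vertex and `1` at the others, and using that `2` has infinite order in characteristic
zero, invariance of `X^m` forces the total exponent of arrows entering each vertex to equal that of
arrows leaving it. Thus `m₀₁ - m₁₀ = m₁₂ - m₂₁ = m₂₀ - m₀₂ = δ`: after splitting off the largest
powers of the 2-cycles, what remains is a power `|δ|` of one of the two 3-cycles
(`monomial_mem_of_balanced`). The converse only needs the five generators to be invariant.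
-/

open MvPolynomial

/-- The variables of the triangle-quiver invariant ring: one variable `X (i,j)` for each
ordered pair of distinct vertices `i ≠ j` in `Fin 3`. -/
abbrev QuiverVar := {p : Fin 3 × Fin 3 // p.1 ≠ p.2}

lemma univ_quiverVar : (Finset.univ : Finset QuiverVar) =
    {⟨(0, 1), by decide⟩, ⟨(1, 0), by decide⟩, ⟨(1, 2), by decide⟩, ⟨(2, 1), by decide⟩,
      ⟨(2, 0), by decide⟩, ⟨(0, 2), by decide⟩} := by
  decide

lemma prod_quiverVar {M : Type*} [CommMonoid M] (f : QuiverVar → M) :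
    ∏ e, f e = f ⟨(0, 1), by decide⟩ * f ⟨(1, 0), by decide⟩ * f ⟨(1, 2), by decide⟩ *
      f ⟨(2, 1), by decide⟩ * f ⟨(2, 0), by decide⟩ * f ⟨(0, 2), by decide⟩ := by
  rw [univ_quiverVar]
  repeat rw [Finset.prod_insert (by decide)]
  rw [Finset.prod_singleton]
  simp only [mul_assoc]

lemma monomial_one_eq_prod {k : Type*} [Field k] {σ : Type*} [Fintype σ] (m : σ →₀ ℕ) :
    (monomial m (1 : k)) = ∏ e, X e ^ m e := by
  rw [monomial_eq, C_1, one_mul, Finsupp.prod_fintype _ _ (fun _ => pow_zero _)]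

/-- A diagonal substitution multiplies the coefficient of `X^m` by the character value
`∏ c e ^ m e`. -/
lemma coeff_aeval_smul_X {k : Type*} [Field k] {σ : Type*} [Fintype σ] (c : σ → k)
    (P : MvPolynomial σ k) (m : σ →₀ ℕ) :
    coeff m (aeval (fun e => c e • (X e : MvPolynomial σ k)) P) =
      (∏ e, c e ^ m e) * coeff m P := by
  classical
  induction P using MvPolynomial.induction_on' with
  | monomial n a =>
    have h : aeval (fun e => c e • (X e : MvPolynomial σ k)) (monomial n a) =
        monomial n ((∏ e, c e ^ n e) * a) := by
      rw [aeval_monomial, Finsupp.prod_fintype _ _ (fun _ => pow_zero _)]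
      simp only [smul_pow, Finset.prod_smul, ← monomial_one_eq_prod, algebraMap_eq,
        smul_monomial, C_mul_monomial, smul_eq_mul, mul_one]
      rw [mul_comm]
    rw [h, coeff_monomial, coeff_monomial]
    split_ifs with hn
    · rw [hn]
    · rw [mul_zero]
  | add p q hp hq => rw [map_add, coeff_add, coeff_add, hp, hq, mul_add]

lemma eq_of_inv_two_pow_mul_two_pow {k : Type*} [Field k] [CharZero k] {a b : ℕ}
    (h : ((2 : k)⁻¹) ^ a * 2 ^ b = 1) : a = b := by
  have h2 : (2 : k) ^ b = 2 ^ a := by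
    rw [inv_pow, inv_mul_eq_one₀ (pow_ne_zero _ two_ne_zero)] at h
    exact h.symm
  have h3 : (2 : ℕ) ^ b = 2 ^ a := by exact_mod_cast h2
  exact (Nat.pow_right_injective le_rfl h3).symm

/-- If the exponents of arrows leaving and entering each of the vertices `0` and `1` agree, then
the monomial is a product of 2-cycles and copies of a single 3-cycle, of the orientation
determined by the sign of `m₀₁ - m₁₀`. Balance at vertex `2` is then automatic. -/
lemma monomial_mem_of_balanced {k : Type*} [Field k]
    {S : Subalgebra k (MvPolynomial QuiverVar k)}
    (h1 : X ⟨(1, 2), by decide⟩ * X ⟨(2, 1), by decide⟩ ∈ S)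
    (h2 : X ⟨(0, 2), by decide⟩ * X ⟨(2, 0), by decide⟩ ∈ S)
    (h3 : X ⟨(0, 1), by decide⟩ * X ⟨(1, 0), by decide⟩ ∈ S)
    (h4 : X ⟨(0, 1), by decide⟩ * X ⟨(1, 2), by decide⟩ * X ⟨(2, 0), by decide⟩ ∈ S)
    (h5 : X ⟨(0, 2), by decide⟩ * X ⟨(2, 1), by decide⟩ * X ⟨(1, 0), by decide⟩ ∈ S)
    (m : QuiverVar →₀ ℕ)
    (b0 : m ⟨(0, 1), by decide⟩ + m ⟨(0, 2), by decide⟩ =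
      m ⟨(1, 0), by decide⟩ + m ⟨(2, 0), by decide⟩)
    (b1 : m ⟨(1, 0), by decide⟩ + m ⟨(1, 2), by decide⟩ =
      m ⟨(0, 1), by decide⟩ + m ⟨(2, 1), by decide⟩) :
    monomial m (1 : k) ∈ S := by
  rw [monomial_one_eq_prod, prod_quiverVar]
  generalize m ⟨(0, 1), _⟩ = a at *
  generalize m ⟨(1, 0), _⟩ = b at *
  generalize m ⟨(1, 2), _⟩ = c at *
  generalize m ⟨(2, 1), _⟩ = d at *
  generalize m ⟨(2, 0), _⟩ = e at *
  generalize m ⟨(0, 2), _⟩ = f at *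
  rcases le_total b a with hab | hab
  · obtain ⟨δ, rfl⟩ := Nat.exists_eq_add_of_le hab
    obtain rfl : c = d + δ := by omega
    obtain rfl : e = f + δ := by omega
    convert S.mul_mem (S.mul_mem (S.mul_mem (pow_mem h3 b) (pow_mem h1 d)) (pow_mem h2 f))
      (pow_mem h4 δ) using 1
    ring
  · obtain ⟨δ, rfl⟩ := Nat.exists_eq_add_of_le hab
    obtain rfl : d = c + δ := by omega
    obtain rfl : f = e + δ := by omega
    convert S.mul_mem (S.mul_mem (S.mul_mem (pow_mem h3 a) (pow_mem h1 c)) (pow_mem h2 e))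
      (pow_mem h5 δ) using 1
    ring

/-- First fundamental theorem for the torus action `X_{ij} ↦ tᵢ⁻¹ tⱼ X_{ij}` on
`k[X_{ij} : i ≠ j]`: a polynomial is invariant for all `(t₁,t₂,t₃) ∈ (kˣ)³` iff it lies in
the subalgebra generated by `Y₁ = X₂₃X₃₂`, `Y₂ = X₁₃X₃₁`, `Y₃ = X₁₂X₂₁`,
`Y₄ = X₁₂X₂₃X₃₁`, `Y₅ = X₁₃X₃₂X₂₁` (vertices indexed `0,1,2`). -/
theorem stmt_8 {k : Type*} [Field k] [CharZero k] [Infinite k]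
    (P : MvPolynomial QuiverVar k) :
    (∀ t : Fin 3 → kˣ, MvPolynomial.aeval
        (fun e : QuiverVar =>
          ((((t e.1.1)⁻¹ : kˣ) : k) * ((t e.1.2 : kˣ) : k)) •
            (MvPolynomial.X e : MvPolynomial QuiverVar k)) P = P)
    ↔ P ∈ Algebra.adjoin k
        ({MvPolynomial.X ⟨(1, 2), by decide⟩ * MvPolynomial.X ⟨(2, 1), by decide⟩,
          MvPolynomial.X ⟨(0, 2), by decide⟩ * MvPolynomial.X ⟨(2, 0), by decide⟩,
          MvPolynomial.X ⟨(0, 1), by decide⟩ * MvPolynomial.X ⟨(1, 0), by decide⟩,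
          MvPolynomial.X ⟨(0, 1), by decide⟩ * MvPolynomial.X ⟨(1, 2), by decide⟩
            * MvPolynomial.X ⟨(2, 0), by decide⟩,
          MvPolynomial.X ⟨(0, 2), by decide⟩ * MvPolynomial.X ⟨(2, 1), by decide⟩
            * MvPolynomial.X ⟨(1, 0), by decide⟩} : Set (MvPolynomial QuiverVar k)) := by
  constructor
  · intro h
    rw [P.as_sum]
    refine Subalgebra.sum_mem _ fun m hm => ?_
    have hchar : ∀ t : Fin 3 → kˣ,
        ∏ e : QuiverVar, ((((t e.1.1)⁻¹ : kˣ) : k) * ((t e.1.2 : kˣ) : k)) ^ m e = 1 := by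
      intro t
      have hc := congrArg (coeff m) (h t)
      rw [coeff_aeval_smul_X] at hc
      exact mul_right_cancel₀ (mem_support_iff.mp hm) (hc.trans (one_mul _).symm)
    -- The one-parameter subgroup at vertex `i`, evaluated at `2`, detects balance at `i`.
    have b0 := hchar (Function.update 1 0 (Units.mk0 2 two_ne_zero))
    have b1 := hchar (Function.update 1 1 (Units.mk0 2 two_ne_zero))
    rw [prod_quiverVar] at b0 b1
    simp at b0 b1
    have hsmul : monomial m (coeff m P) = coeff m P • monomial m (1 : k) := by
      rw [smul_monomial, smul_eq_mul, mul_one]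
    rw [hsmul]
    refine Subalgebra.smul_mem _ (monomial_mem_of_balanced
      (Algebra.subset_adjoin (by simp)) (Algebra.subset_adjoin (by simp))
      (Algebra.subset_adjoin (by simp)) (Algebra.subset_adjoin (by simp))
      (Algebra.subset_adjoin (by simp)) m ?_ ?_) _
    · refine eq_of_inv_two_pow_mul_two_pow (k := k) ?_
      rw [← b0]
      simp only [pow_add, inv_pow]
      ring
    · refine eq_of_inv_two_pow_mul_two_pow (k := k) ?_
      rw [← b1]
      simp only [pow_add, inv_pow]
      ring
  · intro hP t
    refine (Algebra.adjoin_le (S := AlgHom.equalizer (aeval (fun e : QuiverVar =>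
      ((((t e.1.1)⁻¹ : kˣ) : k) * ((t e.1.2 : kˣ) : k)) • (X e : MvPolynomial QuiverVar k)))
      (AlgHom.id k _)) ?_) hP
    have h0 := (t 0).ne_zero
    have h1 := (t 1).ne_zero
    have h2 := (t 2).ne_zero
    rintro _ (rfl | rfl | rfl | rfl | rfl) <;>
    · simp only [SetLike.mem_coe, AlgHom.mem_equalizer, map_mul, aeval_X, AlgHom.id_apply,
        smul_mul_smul_comm, Units.val_inv_eq_inv_val]
      convert one_smul k _ using 2
      field_simp
end

section
/- Let k be a field of characteristic zero. The kernel of the k-algebra homomorphism ψ : k[Y₁, Y₂, Y₃, Y₄, Y₅] → k[X₁₂, X₁₃, X₂₁, X₂₃, X₃₁, X₃₂] determined by ψ(Y₁) = X₂₃X₃₂, ψ(Y₂) = X₁₃X₃₁, ψ(Y₃) = X₁₂X₂₁, ψ(Y₄) = X₁₂X₂₃X₃₁ and ψ(Y₅) = X₁₃X₃₂X₂₁ is the principal ideal generated by Y₄Y₅ − Y₁Y₂Y₃. -/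
/-!
The map `ψ` sends monomials to monomials, so it is governed by the induced additive map `φ` on
exponents, `quiverExp`. Two exponents `e`, `e'` with `φ e = φ e'` differ by an integer multiple of
`(1, 1, 1, -1, -1)`, so `Y^e` and `Y^e'` agree modulo the relation (`monomial_sub_mem`). Hence the
`k`-linear map sending `X^u` to the class of `Y^e`, for any chosen `e` in the fibre of `φ` over `u`,
composes with `ψ` to the quotient map `k[Y] → k[Y]/(Y₄Y₅ - Y₁Y₂Y₃)`: everything killed by `ψ` is
killed by the quotient map. The reverse inclusion is a direct computation.
-/

open MvPolynomial

/-- The exponents of the five monomials `ψ(Yᵢ)`. -/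
noncomputable def quiverWeight : Fin 5 → (QuiverVar →₀ ℕ) :=
  ![Finsupp.single ⟨(1, 2), by decide⟩ 1 + Finsupp.single ⟨(2, 1), by decide⟩ 1,
    Finsupp.single ⟨(0, 2), by decide⟩ 1 + Finsupp.single ⟨(2, 0), by decide⟩ 1,
    Finsupp.single ⟨(0, 1), by decide⟩ 1 + Finsupp.single ⟨(1, 0), by decide⟩ 1,
    Finsupp.single ⟨(0, 1), by decide⟩ 1 + Finsupp.single ⟨(1, 2), by decide⟩ 1
      + Finsupp.single ⟨(2, 0), by decide⟩ 1,
    Finsupp.single ⟨(0, 2), by decide⟩ 1 + Finsupp.single ⟨(2, 1), by decide⟩ 1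
      + Finsupp.single ⟨(1, 0), by decide⟩ 1]

/-- The map on exponents induced by `ψ`: the image of `Y^e` is `X^(quiverExp e)`. -/
noncomputable def quiverExp (e : Fin 5 →₀ ℕ) : QuiverVar →₀ ℕ :=
  ∑ i, e i • quiverWeight i

theorem quiverExp_eq {e e' : Fin 5 →₀ ℕ} (h : quiverExp e = quiverExp e') :
    e 0 + e 3 = e' 0 + e' 3 ∧ e 0 + e 4 = e' 0 + e' 4 ∧ e 1 + e 4 = e' 1 + e' 4 ∧
      e 1 + e 3 = e' 1 + e' 3 ∧ e 2 + e 3 = e' 2 + e' 3 ∧ e 2 + e 4 = e' 2 + e' 4 := by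
  have h1 := DFunLike.congr_fun h ⟨(1, 2), by decide⟩
  have h2 := DFunLike.congr_fun h ⟨(2, 1), by decide⟩
  have h3 := DFunLike.congr_fun h ⟨(0, 2), by decide⟩
  have h4 := DFunLike.congr_fun h ⟨(2, 0), by decide⟩
  have h5 := DFunLike.congr_fun h ⟨(0, 1), by decide⟩
  have h6 := DFunLike.congr_fun h ⟨(1, 0), by decide⟩
  simp [quiverExp, quiverWeight, Fin.sum_univ_five] at h1 h2 h3 h4 h5 h6
  exact ⟨h1, h2, h3, h4, h5, h6⟩

theorem monomial_fin_five {k : Type*} [Field k] (e : Fin 5 →₀ ℕ) :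
    (monomial e 1 : MvPolynomial (Fin 5) k) =
      X 0 ^ e 0 * X 1 ^ e 1 * X 2 ^ e 2 * X 3 ^ e 3 * X 4 ^ e 4 := by
  rw [monomial_eq, Finsupp.prod_fintype _ _ (fun _ => pow_zero _), Fin.prod_univ_five]
  simp

/-- Monomials with the same image under `ψ` agree modulo the relation; the hypothesis on the
exponents of `Y₄` loses no generality. -/
theorem monomial_sub_mem_of_le {k : Type*} [Field k] {e e' : Fin 5 →₀ ℕ}
    (h : quiverExp e = quiverExp e') (hle : e 3 ≤ e' 3) :
    (monomial e' 1 - monomial e 1 : MvPolynomial (Fin 5) k) ∈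
      Ideal.span {(X 3 * X 4 - X 0 * X 1 * X 2 : MvPolynomial (Fin 5) k)} := by
  obtain ⟨h1, h2, h3, h4, h5, h6⟩ := quiverExp_eq h
  obtain ⟨t, ht⟩ := Nat.exists_eq_add_of_le hle
  have e4 : e' 4 = e 4 + t := by omega
  have e0 : e 0 = e' 0 + t := by omega
  have e1 : e 1 = e' 1 + t := by omega
  have e2 : e 2 = e' 2 + t := by omega
  rw [Ideal.mem_span_singleton, monomial_fin_five, monomial_fin_five, ht, e4, e0, e1, e2]
  refine (sub_dvd_pow_sub_pow (X 3 * X 4) (X 0 * X 1 * X 2 : MvPolynomial (Fin 5) k) t).trans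
    ⟨X 0 ^ e' 0 * X 1 ^ e' 1 * X 2 ^ e' 2 * X 3 ^ e 3 * X 4 ^ e 4, ?_⟩
  ring

theorem monomial_sub_mem {k : Type*} [Field k] {e e' : Fin 5 →₀ ℕ}
    (h : quiverExp e = quiverExp e') :
    (monomial e' 1 - monomial e 1 : MvPolynomial (Fin 5) k) ∈
      Ideal.span {(X 3 * X 4 - X 0 * X 1 * X 2 : MvPolynomial (Fin 5) k)} := by
  rcases le_total (e 3) (e' 3) with hle | hle
  · exact monomial_sub_mem_of_le h hle
  · rw [← neg_sub (monomial e 1)]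
    exact neg_mem (monomial_sub_mem_of_le (k := k) h.symm hle)

theorem aeval_monomial_weight {k : Type*} [Field k] (f : Fin 5 → MvPolynomial QuiverVar k)
    (hf : ∀ i, f i = monomial (quiverWeight i) 1) (e : Fin 5 →₀ ℕ) :
    aeval f (monomial e (1 : k)) = monomial (quiverExp e) 1 := by
  rw [aeval_monomial, Finsupp.prod_fintype _ _ (fun _ => pow_zero _), map_one, one_mul, quiverExp,
    monomial_sum_one]
  exact Finset.prod_congr rfl fun i _ => by rw [hf, monomial_pow, one_pow]

theorem mem_span_of_aeval_eq_zero {k : Type*} [Field k] (f : Fin 5 → MvPolynomial QuiverVar k)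
    (hf : ∀ i, f i = monomial (quiverWeight i) 1) (p : MvPolynomial (Fin 5) k)
    (hp : aeval f p = 0) :
    p ∈ Ideal.span {(X 3 * X 4 - X 0 * X 1 * X 2 : MvPolynomial (Fin 5) k)} := by
  set I := Ideal.span {(X 3 * X 4 - X 0 * X 1 * X 2 : MvPolynomial (Fin 5) k)} with hI
  let s : MvPolynomial QuiverVar k →ₗ[k] MvPolynomial (Fin 5) k ⧸ I :=
    (basisMonomials QuiverVar k).constr k fun u =>
      Ideal.Quotient.mk I (monomial (Function.invFun quiverExp u) 1)
  -- Well-definedness up to the relation makes the choice of preimage exponent harmless.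
  have hs : s ∘ₗ (aeval f).toLinearMap = (Ideal.Quotient.mkₐ k I).toLinearMap := by
    refine (basisMonomials (Fin 5) k).ext fun e => ?_
    have hb : s (monomial (quiverExp e) 1) =
        Ideal.Quotient.mk I (monomial (Function.invFun quiverExp (quiverExp e)) 1) := by
      simpa only [coe_basisMonomials] using (basisMonomials QuiverVar k).constr_basis k
        (fun u => Ideal.Quotient.mk I (monomial (Function.invFun quiverExp u) 1)) (quiverExp e)
    simp only [coe_basisMonomials, LinearMap.comp_apply, AlgHom.toLinearMap_apply,
      aeval_monomial_weight f hf, hb, Ideal.Quotient.mkₐ_eq_mk]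
    exact Ideal.Quotient.eq.mpr (monomial_sub_mem (Function.invFun_eq ⟨e, rfl⟩).symm)
  have := LinearMap.congr_fun hs p
  simp only [LinearMap.comp_apply, AlgHom.toLinearMap_apply, hp, map_zero,
    Ideal.Quotient.mkₐ_eq_mk] at this
  exact Ideal.Quotient.eq_zero_iff_mem.mp this.symm

/-- The kernel of the k-algebra map `k[Y₁,…,Y₅] → k[X_{ij} : i ≠ j]` sending
`Y₁ ↦ X₂₃X₃₂`, `Y₂ ↦ X₁₃X₃₁`, `Y₃ ↦ X₁₂X₂₁`, `Y₄ ↦ X₁₂X₂₃X₃₁`, `Y₅ ↦ X₁₃X₃₂X₂₁`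
(vertices indexed `0,1,2`) is the principal ideal generated by `Y₄Y₅ - Y₁Y₂Y₃`. -/
theorem stmt_9 {k : Type*} [Field k] [CharZero k] :
    RingHom.ker (MvPolynomial.aeval
        (![MvPolynomial.X ⟨(1, 2), by decide⟩ * MvPolynomial.X ⟨(2, 1), by decide⟩,
           MvPolynomial.X ⟨(0, 2), by decide⟩ * MvPolynomial.X ⟨(2, 0), by decide⟩,
           MvPolynomial.X ⟨(0, 1), by decide⟩ * MvPolynomial.X ⟨(1, 0), by decide⟩,
           MvPolynomial.X ⟨(0, 1), by decide⟩ * MvPolynomial.X ⟨(1, 2), by decide⟩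
             * MvPolynomial.X ⟨(2, 0), by decide⟩,
           MvPolynomial.X ⟨(0, 2), by decide⟩ * MvPolynomial.X ⟨(2, 1), by decide⟩
             * MvPolynomial.X ⟨(1, 0), by decide⟩] :
          Fin 5 → MvPolynomial QuiverVar k)).toRingHom
      = Ideal.span {(MvPolynomial.X 3 * MvPolynomial.X 4
          - MvPolynomial.X 0 * MvPolynomial.X 1 * MvPolynomial.X 2 :
            MvPolynomial (Fin 5) k)} := by
  refine le_antisymm (fun p hp => mem_span_of_aeval_eq_zero _ (fun i => ?_) p hp) ?_
  · fin_cases i <;> simp [quiverWeight, X, monomial_mul]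
  · rw [Ideal.span_singleton_le_iff_mem, RingHom.mem_ker]
    simp
    ring
end

section
/- Let k be a field of characteristic zero (e.g. k = ℂ). Let P be a polynomial in the 12 variables given by the entries of three 2×2 matrices a₁, a₂, a₃, and suppose P is invariant under simultaneous conjugation: P(g·a₁·g⁻¹, g·a₂·g⁻¹, g·a₃·g⁻¹) = P(a₁, a₂, a₃) for every invertible 2×2 matrix g over k and all matrices a₁, a₂, a₃. Then P lies in the k-subalgebra generated by the ten polynomials u_i = tr(a_i) (1 ≤ i ≤ 3), v_{ij} = tr(b_i b_j) (1 ≤ i ≤ j ≤ 3), and w = Σ_{σ∈S₃} ε(σ)·tr(b_{σ(1)} b_{σ(2)} b_{σ(3)}), where bᵢ = aᵢ − (1/2)tr(aᵢ)·I. -/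
open Matrix MvPolynomial

/-!
A polynomial invariant under all `1 + s B` with `B ^ 2 = 0` is, over an infinite field, invariant
under the indeterminate version of this group, so it is killed by the derivations
`aᵢ ↦ B aᵢ - aᵢ B` (`conjD_eq_zero`). Splitting `M₂ = k ⊕ sl₂` and moving the three traces into the
coefficient ring `R = k[t₁, t₂, t₃]`, one is left with polynomials over `R` in three vectors of
length three, infinitesimally invariant under the orthogonal Lie algebra of `x₀² + x₁² - x₂²`, which
is half the trace form (`inv_toVec`). The claim becomes that these invariants are generated by the
Gram polynomials and the determinant (`mem_of_inv`). Under the change of coordinates the Gram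
polynomials are half the `tr(bᵢ bⱼ)`, and the determinant is `-1/12` of the alternating sum of the
`tr(bᵢ bⱼ bₗ)`.

The first fundamental theorem for the orthogonal Lie algebra is proved by a Capelli-type identity
(`sum_gram_lap`): on invariants, `∑ gram i j * lap i j` equals `∑ E i j E j i - ∑ E i i`, where
`E i j` are the polarizations. One may assume `P` multihomogeneous of multidegree `d`. Both
Laplacians and polarizations commute with the Lie algebra action, up to combinations that vanish on
invariants. Laplacians lower the total degree, and the polarizations from a vector of lower degree
towards one of higher or equal degree lower `(∑ dᵢ)² - ∑ dᵢ²`. By induction on these two quantities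
the images of `P` under such operators lie in the generated algebra, which is stable under
polarization (`E_mem`). Commuting `E i j` past `E j i` where needed, the identity then shows
that `c P` lies in the algebra, with `c = ∑ dᵢ² - ∑ dᵢ + ∑_{i < j} |dᵢ - dⱼ|`. For `d ≥ 0` this
integer vanishes only when `d = 0`, where `P` is constant, or `d = (1, 1, 1)`, where an invariant
trilinear form is a multiple of the determinant (`trilinear`).
-/

/-- The i-th generic 2×2 matrix, whose entries are the variables `X (i, r, c)`. -/
noncomputable def genA {k : Type*} [Field k] (i : Fin 3) :
    Matrix (Fin 2) (Fin 2) (MvPolynomial (Fin 3 × Fin 2 × Fin 2) k) :=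
  Matrix.of fun r c => MvPolynomial.X (i, r, c)

/-- The traceless part `bᵢ = aᵢ - (1/2) tr(aᵢ)·I` of the i-th generic 2×2 matrix. -/
noncomputable def genB {k : Type*} [Field k] (i : Fin 3) :
    Matrix (Fin 2) (Fin 2) (MvPolynomial (Fin 3 × Fin 2 × Fin 2) k) :=
  genA (k := k) i - ((1 / 2 : k) • Matrix.trace (genA (k := k) i)) • 1

namespace FFT

/-! ### Polarizations and coordinate operators -/

section Operators

variable {R : Type*} [CommRing R]

/-- The polynomial ring on three generic vectors of length three: `X (a, i)` is the `a`-th coordinate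
of the `i`-th vector. -/
abbrev Vec (R : Type*) [CommRing R] := MvPolynomial (Fin 3 × Fin 3) R

/-- The polarization operator `E i j = ∑ₐ x_{a,i} ∂/∂x_{a,j}` replacing the `j`-th vector by the
`i`-th. -/
noncomputable def E (i j : Fin 3) : Derivation R (Vec R) (Vec R) :=
  ∑ a, (X (a, i) : Vec R) • pderiv (a, j)

/-- The operator `L a b = ∑ᵢ x_{a,i} ∂/∂x_{b,i}` acting on coordinates, simultaneously on the three
vectors. -/
noncomputable def L (a b : Fin 3) : Derivation R (Vec R) (Vec R) :=
  ∑ i, (X (a, i) : Vec R) • pderiv (b, i)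

lemma E_apply (i j : Fin 3) (P : Vec R) : E i j P = ∑ a, X (a, i) * pderiv (a, j) P := by
  simp [E, Fin.sum_univ_three]

lemma L_apply (a b : Fin 3) (P : Vec R) : L a b P = ∑ i, X (a, i) * pderiv (b, i) P := by
  simp [L, Fin.sum_univ_three]

lemma E_X (i j a l : Fin 3) : E (R := R) i j (X (a, l)) = if l = j then X (a, i) else 0 := by
  simp [E_apply, pderiv_X, Pi.single_apply, Finset.sum_ite_eq, ite_and]

lemma L_X (a b c l : Fin 3) : L (R := R) a b (X (c, l)) = if c = b then X (a, l) else 0 := by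
  simp [L_apply, pderiv_X, Pi.single_apply, Finset.sum_ite_eq, ite_and]

lemma pderiv_comm (p q : Fin 3 × Fin 3) (P : Vec R) :
    pderiv p (pderiv q P) = pderiv q (pderiv p P) := by
  have h : ⁅(pderiv p : Derivation R (Vec R) (Vec R)), (pderiv q : Derivation R (Vec R) (Vec R))⁆ = 0 := by
    apply derivation_ext
    intro i
    simp only [Derivation.commutator_apply, pderiv_X, Pi.single_apply]
    split_ifs <;> simp
  have := DFunLike.congr_fun h P
  simpa [Derivation.commutator_apply, sub_eq_zero] using this

lemma pderiv_E (c l i j : Fin 3) (P : Vec R) :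
    pderiv (c, l) (E i j P) = E i j (pderiv (c, l) P) + if l = i then pderiv (c, j) P else 0 := by
  have h1 (a : Fin 3) : pderiv (c, l) (X (a, i) * pderiv (a, j) P) =
      X (a, i) * pderiv (a, j) (pderiv (c, l) P) +
        if c = a then (if l = i then pderiv (c, j) P else 0) else 0 := by
    rw [pderiv_mul, pderiv_comm (c, l), pderiv_X, Pi.single_apply]
    by_cases h : c = a <;> by_cases h' : l = i <;> simp [h, h', eq_comm]; ring
  simp only [E_apply, map_sum, h1, Finset.sum_add_distrib, Finset.sum_ite_eq, Finset.mem_univ,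
    if_true]

lemma pderiv_L (c l a b : Fin 3) (P : Vec R) :
    pderiv (c, l) (L a b P) = L a b (pderiv (c, l) P) + if c = a then pderiv (b, l) P else 0 := by
  have h1 (i : Fin 3) : pderiv (c, l) (X (a, i) * pderiv (b, i) P) =
      X (a, i) * pderiv (b, i) (pderiv (c, l) P) +
        if l = i then (if c = a then pderiv (b, l) P else 0) else 0 := by
    rw [pderiv_mul, pderiv_comm (c, l), pderiv_X, Pi.single_apply]
    by_cases h : c = a <;> by_cases h' : l = i <;> simp [h, h', eq_comm]; ring
  simp only [L_apply, map_sum, h1, Finset.sum_add_distrib, Finset.sum_ite_eq, Finset.mem_univ,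
    if_true]

lemma L_E_comm (a b i j : Fin 3) (P : Vec R) : L a b (E i j P) = E i j (L a b P) := by
  have h : ⁅(L a b : Derivation R (Vec R) (Vec R)), (E i j : Derivation R (Vec R) (Vec R))⁆ = 0 := by
    apply derivation_ext
    rintro ⟨c, l⟩
    simp only [Derivation.commutator_apply, E_X, L_X, apply_ite (E (R := R) i j),
      apply_ite (L (R := R) a b), map_zero]
    split_ifs <;> simp
  have := DFunLike.congr_fun h P
  simpa [Derivation.commutator_apply, sub_eq_zero] using this

lemma E_E_comm (i j k l : Fin 3) (P : Vec R) :
    E i j (E k l P) = E k l (E i j P) + (if j = k then E i l P else 0)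
      - (if i = l then E k j P else 0) := by
  have h : ⁅(E i j : Derivation R (Vec R) (Vec R)), (E k l : Derivation R (Vec R) (Vec R))⁆ =
      (if j = k then E i l else 0) - (if i = l then E k j else 0) := by
    apply derivation_ext
    rintro ⟨c, m⟩
    simp only [Derivation.commutator_apply, E_X, apply_ite (E (R := R) i j),
      apply_ite (E (R := R) k l), map_zero, Derivation.sub_apply]
    by_cases h1 : j = k <;> by_cases h2 : i = l <;> by_cases h3 : m = l <;> by_cases h4 : m = j <;>
      simp_all [E_X, eq_comm]
  have := DFunLike.congr_fun h P
  simp only [Derivation.commutator_apply, Derivation.sub_apply] at this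
  rw [sub_eq_iff_eq_add] at this
  rw [this]
  split_ifs <;> (try simp only [Derivation.zero_apply]) <;> ring

lemma E_E (i j k l : Fin 3) (P : Vec R) :
    E i j (E k l P) = (∑ a, ∑ b, X (a, i) * X (b, k) * pderiv (a, j) (pderiv (b, l) P)) +
      if j = k then E i l P else 0 := by
  rw [E_apply i j]
  simp only [pderiv_E, mul_add, Finset.sum_add_distrib]
  congr 1
  · refine Finset.sum_congr rfl fun a _ => ?_
    rw [E_apply, Finset.mul_sum]
    refine Finset.sum_congr rfl fun b _ => ?_
    rw [pderiv_comm (b, l)]; ring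
  · split_ifs <;> simp [E_apply]

lemma L_L (a b c d : Fin 3) (P : Vec R) :
    L a b (L c d P) = (∑ i, ∑ j, X (a, i) * X (c, j) * pderiv (b, i) (pderiv (d, j) P)) +
      if b = c then L a d P else 0 := by
  rw [L_apply a b]
  simp only [pderiv_L, mul_add, Finset.sum_add_distrib]
  congr 1
  · refine Finset.sum_congr rfl fun i _ => ?_
    rw [L_apply, Finset.mul_sum]
    refine Finset.sum_congr rfl fun j _ => ?_
    rw [pderiv_comm (d, j)]; ring
  · split_ifs <;> simp [L_apply]

/-- The quadratic Casimir operators of the two commuting actions coincide. -/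
lemma casimir_eq (P : Vec R) : ∑ i, ∑ j, E i j (E j i P) = ∑ a, ∑ b, L a b (L b a P) := by
  have key : ∑ i : Fin 3, ∑ j : Fin 3, ∑ a : Fin 3, ∑ b : Fin 3,
      (X (a, i) * X (b, j) * pderiv (a, j) (pderiv (b, i) P) : Vec R) =
      ∑ a : Fin 3, ∑ b : Fin 3, ∑ i : Fin 3, ∑ j : Fin 3,
      (X (a, i) * X (b, j) * pderiv (b, i) (pderiv (a, j) P) : Vec R) := by
    have h (a b i j : Fin 3) : (X (a, i) * X (b, j) * pderiv (b, i) (pderiv (a, j) P) : Vec R) =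
        X (a, i) * X (b, j) * pderiv (a, j) (pderiv (b, i) P) := by rw [pderiv_comm]
    simp only [h, Fin.sum_univ_three]
    ring
  have tr : ∑ i : Fin 3, E i i P = ∑ a : Fin 3, L a a P := by
    simp only [E_apply, L_apply]
    exact Finset.sum_comm
  simp only [E_E, L_L, if_true, Finset.sum_add_distrib, Finset.sum_const, Finset.card_univ,
    ← Finset.smul_sum, key, tr]

/-! ### Orthogonal invariants and the Capelli-type identity -/

/-- The Gram polynomials of the quadratic form `x₀² + x₁² - x₂²`. -/
noncomputable def gram (i j : Fin 3) : Vec R :=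
  X (0, i) * X (0, j) + X (1, i) * X (1, j) - X (2, i) * X (2, j)

/-- The determinant of the three generic vectors. -/
noncomputable def vol : Vec R :=
  X (0, 0) * (X (1, 1) * X (2, 2) - X (2, 1) * X (1, 2))
  - X (0, 1) * (X (1, 0) * X (2, 2) - X (2, 0) * X (1, 2))
  + X (0, 2) * (X (1, 0) * X (2, 1) - X (2, 0) * X (1, 1))

/-- The mixed Laplacians dual to `gram`. -/
noncomputable def lap (i j : Fin 3) (P : Vec R) : Vec R :=
  pderiv (0, i) (pderiv (0, j) P) + pderiv (1, i) (pderiv (1, j) P)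
    - pderiv (2, i) (pderiv (2, j) P)

/-- Infinitesimal invariance, simultaneously on the three vectors, under the orthogonal Lie algebra of the form `x₀² + x₁² - x₂²`. -/
structure Inv (P : Vec R) : Prop where
  h01 : L 0 1 P = L 1 0 P
  h02 : L 0 2 P = -L 2 0 P
  h12 : L 1 2 P = -L 2 1 P

lemma Inv.map_E {P : Vec R} (h : Inv P) (i j : Fin 3) : Inv (E i j P) := by
  constructor <;> simp only [L_E_comm, h.h01, h.h02, h.h12, map_neg]

lemma Inv.map_lap {P : Vec R} (h : Inv P) (i j : Fin 3) : Inv (lap i j P) := by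
  have key (a b i j c : Fin 3) : L a b (pderiv (c, i) (pderiv (c, j) P)) =
      pderiv (c, i) (pderiv (c, j) (L a b P)) - (if c = a then pderiv (b, i) (pderiv (c, j) P) else 0)
      - (if c = a then pderiv (c, i) (pderiv (b, j) P) else 0) := by
    rw [pderiv_L, map_add, pderiv_L]
    split_ifs
    · ring
    · simp
  constructor
  all_goals simp only [lap, map_add, map_sub, key]
  all_goals simp [h.h01, h.h02, h.h12]
  · rw [pderiv_comm (0, i), pderiv_comm (1, i)]; ring
  · rw [pderiv_comm (0, i), pderiv_comm (2, i)]; ring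
  · rw [pderiv_comm (1, i), pderiv_comm (2, i)]; ring

/-- The Capelli-type identity: on invariants `∑ gram i j * lap i j` is the Casimir operator of the
polarizations minus the Euler operator. -/
lemma sum_gram_lap {P : Vec R} (h : Inv P) :
    ∑ i, ∑ j, gram i j * lap i j P = ∑ i, ∑ j, E i j (E j i P) - ∑ i, E i i P := by
  have tr : ∑ i : Fin 3, E i i P = ∑ a : Fin 3, L a a P := by
    simp only [E_apply, L_apply]
    exact Finset.sum_comm
  have h1 : ∑ i, ∑ j, gram i j * lap i j P =
      L 0 0 (L 0 0 P) + L 1 1 (L 1 1 P) + L 2 2 (L 2 2 P) + L 0 1 (L 0 1 P) + L 1 0 (L 1 0 P)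
      - L 0 2 (L 0 2 P) - L 2 0 (L 2 0 P) - L 1 2 (L 1 2 P) - L 2 1 (L 2 1 P)
      - ∑ a : Fin 3, L a a P := by
    simp only [L_L, Fin.sum_univ_three, gram, lap]
    simp
    ring
  have e01 := congrArg (L 0 1) h.h01
  have e10 := congrArg (L 1 0) h.h01
  have e02 := congrArg (L 0 2) h.h02
  have e20 := congrArg (L 2 0) h.h02
  have e12 := congrArg (L 1 2) h.h12
  have e21 := congrArg (L 2 1) h.h12
  simp only [map_neg] at e02 e20 e12 e21
  rw [h1, casimir_eq, tr]
  simp only [Fin.sum_univ_three]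
  linear_combination e01 - e10 - e02 - e20 - e12 - e21

/-- The subalgebra generated by the Gram polynomials and the determinant. -/
noncomputable def A (R : Type*) [CommRing R] : Subalgebra R (Vec R) :=
  Algebra.adjoin R {q | (∃ i j, q = gram i j) ∨ q = vol}

lemma gram_mem (i j : Fin 3) : gram i j ∈ A R := Algebra.subset_adjoin (Or.inl ⟨i, j, rfl⟩)

lemma vol_mem : vol ∈ A R := Algebra.subset_adjoin (Or.inr rfl)

lemma E_vol (i j : Fin 3) : E i j (vol : Vec R) = if i = j then vol else 0 := by
  simp only [vol, map_add, map_sub, Derivation.leibniz, E_X, smul_eq_mul]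
  fin_cases i <;> fin_cases j <;> simp <;> ring

/-- Polarization preserves the algebra generated by the Gram polynomials and the determinant. -/
lemma E_mem (i j : Fin 3) {P : Vec R} (h : P ∈ A R) : E i j P ∈ A R := by
  induction h using Algebra.adjoin_induction with
  | mem x hx =>
    rcases hx with ⟨k, l, rfl⟩ | rfl
    · have : E i j (gram k l : Vec R) =
          (if k = j then gram i l else 0) + (if l = j then gram k i else 0) := by
        simp only [gram, map_add, map_sub, Derivation.leibniz, E_X, smul_eq_mul]
        split_ifs <;> ring
      rw [this]
      refine add_mem ?_ ?_ <;> split_ifs <;> first | exact gram_mem _ _ | exact zero_mem _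
    · rw [E_vol]
      split_ifs
      exacts [vol_mem, zero_mem _]
  | algebraMap r => simp
  | add x y _ _ hx hy => rw [map_add]; exact add_mem hx hy
  | mul x y hx' hy' hx hy =>
    rw [Derivation.leibniz, smul_eq_mul, smul_eq_mul]
    exact add_mem (mul_mem hx' hy) (mul_mem hy' hx)

lemma coeff_E (m : Fin 3 × Fin 3 →₀ ℕ) (i : Fin 3) (P : Vec R) :
    coeff m (E i i P) = (∑ a, m (a, i) : ℕ) • coeff m P := by
  have h (p : Fin 3 × Fin 3) : coeff m (X p * pderiv p P) = m p • coeff m P := by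
    induction P using MvPolynomial.induction_on' with
    | monomial n r =>
      rw [X_mul_pderiv_monomial, coeff_smul, coeff_monomial]
      split_ifs with h <;> simp [h]
    | add p q hp hq => simp only [map_add, mul_add, coeff_add, hp, hq, smul_add]
  rw [E_apply, coeff_sum, Finset.sum_smul]
  exact Finset.sum_congr rfl fun a _ => h _

/-! ### Multidegrees -/

/-- `P` is multihomogeneous of multidegree `d`, in the form of Euler's identities. Negative degrees
are allowed; they force `P = 0`. -/
def Wt (d : Fin 3 → ℤ) (P : Vec R) : Prop := ∀ i, E i i P = d i • P

lemma Wt.pderiv {d : Fin 3 → ℤ} {P : Vec R} (h : Wt d P) (c l : Fin 3) :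
    Wt (fun k => d k - if l = k then 1 else 0) (pderiv (c, l) P) := by
  intro k
  have := pderiv_E c l k k P
  rw [h k, map_zsmul] at this
  rw [sub_smul, this]
  by_cases hl : l = k <;> simp [hl]

lemma Wt.map_lap {d : Fin 3 → ℤ} {P : Vec R} (h : Wt d P) (i j : Fin 3) :
    Wt (fun k => d k - (if j = k then 1 else 0) - if i = k then 1 else 0) (lap i j P) := by
  intro k
  simp only [lap, map_add, map_sub, ((h.pderiv _ j).pderiv _ i) k, smul_add, smul_sub]

lemma Wt.map_E {d : Fin 3 → ℤ} {P : Vec R} (h : Wt d P) (i j : Fin 3) :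
    Wt (fun k => d k + (if k = i then 1 else 0) - if k = j then 1 else 0) (E i j P) := by
  intro k
  rw [E_E_comm, h k, map_zsmul, sub_smul, add_smul]
  by_cases h1 : k = i <;> by_cases h2 : k = j <;> simp [h1, h2] <;>
    (split_ifs with h3 <;> simp [h3])

/-- By `[E i j, E j i] = E i i - E j j`, the symmetrized product of `E i j` and `E j i` equals, up to
the term `|dᵢ - dⱼ| P`, twice the product in which the operator applied first polarizes towards the
vector of higher degree. -/
lemma pair_mem {d : Fin 3 → ℤ} {P : Vec R} (hw : Wt d P) {i j : Fin 3} (hij : i ≠ j)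
    (hE : ∀ i j, i ≠ j → d j ≤ d i → E i j P ∈ A R) :
    E i j (E j i P) + E j i (E i j P) - |d i - d j| • P ∈ A R := by
  have hc := E_E_comm i j j i P
  rw [if_pos rfl, if_pos rfl, hw i, hw j] at hc
  rcases le_total (d j) (d i) with h | h
  · have : E i j (E j i P) + E j i (E i j P) - |d i - d j| • P = (2 : ℤ) • E j i (E i j P) := by
      rw [abs_of_nonneg (by omega), hc]; module
    rw [this]
    exact zsmul_mem (E_mem _ _ (hE i j hij h)) _
  · have : E i j (E j i P) + E j i (E i j P) - |d i - d j| • P = (2 : ℤ) • E i j (E j i P) := by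
      rw [abs_of_nonpos (by omega), hc]; module
    rw [this]
    exact zsmul_mem (E_mem _ _ (hE j i hij.symm h)) _

section Rat

variable [Algebra ℚ R]

lemma zsmul_cancel {n : ℤ} (hn : n ≠ 0) {r : R} (h : n • r = 0) : r = 0 := by
  rw [← Int.cast_smul_eq_zsmul ℚ] at h
  exact (smul_eq_zero.1 h).resolve_left (by exact_mod_cast hn)

lemma mem_of_zsmul_mem {n : ℤ} (hn : n ≠ 0) {P : Vec R} (h : n • P ∈ A R) : P ∈ A R := by
  have : P = (algebraMap ℚ R (n : ℚ)⁻¹) • (n • P) := by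
    rw [← Int.cast_smul_eq_zsmul R, smul_smul, ← map_intCast (algebraMap ℚ R), ← map_mul,
      inv_mul_cancel₀ (by exact_mod_cast hn), map_one, one_smul]
  rw [this]
  exact Subalgebra.smul_mem _ h _

lemma Wt.coeff_ne {d : Fin 3 → ℤ} {P : Vec R} (h : Wt d P) {m : Fin 3 × Fin 3 →₀ ℕ}
    (hm : coeff m P ≠ 0) (i : Fin 3) : d i = (∑ a, m (a, i) : ℕ) := by
  by_contra hne
  refine hm (zsmul_cancel (sub_ne_zero.2 hne) ?_)
  have := congrArg (coeff m) (h i)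
  rw [coeff_E, coeff_smul] at this
  rw [sub_smul, ← this, natCast_zsmul, sub_self]

lemma Wt.eq_zero {d : Fin 3 → ℤ} {P : Vec R} (h : Wt d P) {i : Fin 3} (hi : d i < 0) : P = 0 := by
  ext m
  by_contra hm
  have := h.coeff_ne hm i
  omega

lemma Wt.eq_C {P : Vec R} {d : Fin 3 → ℤ} (h : Wt d P) (hd : ∀ i, d i = 0) :
    P = C (coeff 0 P) := by
  ext m
  rw [coeff_C]
  split_ifs with h0
  · rw [h0]
  · by_contra hm
    refine h0 (Eq.symm (Finsupp.ext ?_))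
    rintro ⟨a, i⟩
    have := h.coeff_ne hm i
    rw [hd i, eq_comm, Nat.cast_eq_zero, Finset.sum_eq_zero_iff] at this
    exact this a (Finset.mem_univ _)

/-! ### The first fundamental theorem for three vectors -/

/-- The exceptional multidegree `(1, 1, 1)`, on which the scalar in the Capelli-type identity vanishes:
an invariant trilinear form is a multiple of the determinant. -/
lemma trilinear {d : Fin 3 → ℤ} {P : Vec R} (hd : ∀ i, d i = 1) (hw : Wt d P) (h : Inv P) :
    P ∈ A R := by
  set T : Fin 3 → Fin 3 → Fin 3 → Vec R := fun a b c =>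
    pderiv (c, 2) (pderiv (b, 1) (pderiv (a, 0) P)) with hT
  have hTw (a b c) := ((hw.pderiv a 0).pderiv b 1).pderiv c 2
  have hTC (a b c) : T a b c = C (coeff 0 (T a b c)) :=
    (hTw a b c).eq_C fun i => by fin_cases i <;> simp [hd]
  have hP : P = ∑ a, ∑ b, ∑ c, X (a, 0) * X (b, 1) * X (c, 2) * T a b c := by
    have e0 : P = ∑ a, X (a, 0) * pderiv (a, 0) P := by
      rw [← E_apply, hw 0, hd, one_smul]
    have e1 (a) : pderiv (a, 0) P = ∑ b, X (b, 1) * pderiv (b, 1) (pderiv (a, 0) P) := by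
      rw [← E_apply, (hw.pderiv a 0) 1]; simp [hd]
    have e2 (a b) : pderiv (b, 1) (pderiv (a, 0) P) = ∑ c, X (c, 2) * T a b c := by
      rw [← E_apply, ((hw.pderiv a 0).pderiv b 1) 2]; simp [hd]
    calc P = ∑ a, X (a, 0) * ∑ b, X (b, 1) * ∑ c, X (c, 2) * T a b c := by
          simp only [← e2, ← e1, ← e0]
      _ = _ := by simp only [Finset.mul_sum, mul_assoc]
  -- Third derivatives of `L p q P` give the linear conditions imposed on the tensor `T`.
  have hL (p q a b c) : pderiv (c, 2) (pderiv (b, 1) (pderiv (a, 0) (L p q P))) =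
      (if a = p then T q b c else 0) + (if b = p then T a q c else 0) +
        (if c = p then T a b q else 0) := by
    have h0 : L p q (T a b c) = 0 := by rw [hTC, ← algebraMap_eq, Derivation.map_algebraMap]
    simp only [pderiv_L, map_add, apply_ite (pderiv _), map_zero]
    simp only [hT] at h0 ⊢
    rw [h0]
    split_ifs <;> ring
  have H01 (a b c) := hL 0 1 a b c
  have H02 (a b c) := hL 0 2 a b c
  have H12 (a b c) := hL 1 2 a b c
  simp only [h.h01, h.h02, h.h12, map_neg, hL] at H01 H02 H12
  clear_value T
  have key : P = T 0 1 2 * vol := by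
    rw [hP]
    simp only [Fin.forall_fin_succ] at H01 H02 H12
    simp at H01 H02 H12
    simp only [Fin.sum_univ_three, vol]
    -- The linear conditions force `T` to be alternating.
    grind
  rw [key, hTC, ← smul_eq_C_mul]
  exact Subalgebra.smul_mem _ vol_mem _

/-- Invariant multihomogeneous polynomials lie in `A R`, by induction on the total degree `∑ dᵢ` and, for
fixed total degree, on `(∑ dᵢ)² - ∑ dᵢ²`. The Laplacians lower the first quantity, and the
polarizations from a vector of lower to one of higher degree lower the second. -/
lemma homogeneous_mem (n : ℕ) : ∀ (k : ℕ) (d : Fin 3 → ℤ) (P : Vec R),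
    d 0 + d 1 + d 2 ≤ n → (d 0 + d 1 + d 2) ^ 2 - (d 0 ^ 2 + d 1 ^ 2 + d 2 ^ 2) ≤ k →
    Wt d P → Inv P → P ∈ A R := by
  induction n using Nat.strong_induction_on with
  | _ n ihn =>
  intro k
  induction k using Nat.strong_induction_on with
  | _ k ihk =>
  intro d P hn hk hw h
  by_cases hneg : ∃ i, d i < 0
  · obtain ⟨i, hi⟩ := hneg
    rw [hw.eq_zero hi]
    exact zero_mem _
  push Not at hneg
  have hd0 := hneg 0
  have hd1 := hneg 1
  have hd2 := hneg 2
  have hlap (i j) : lap i j P ∈ A R := by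
    have hw' := hw.map_lap i j
    by_cases h2 : d 0 + d 1 + d 2 < 2
    · suffices h0 : ∃ k, d k - (if j = k then 1 else 0) - (if i = k then 1 else 0) < 0 by
        obtain ⟨k, hk⟩ := h0
        rw [hw'.eq_zero hk]
        exact zero_mem _
      by_contra! hc
      have c0 := hc 0
      have c1 := hc 1
      have c2 := hc 2
      revert c0 c1 c2
      fin_cases i <;> fin_cases j <;> simp <;> omega
    · refine ihn (n - 2) (by omega) _ _ _ ?_ (Int.self_le_toNat _) hw' (h.map_lap i j)
      fin_cases i <;> fin_cases j <;> simp <;> omega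
  have hE (i j) (hij : i ≠ j) (hle : d j ≤ d i) : E i j P ∈ A R := by
    have hw' := hw.map_E i j
    by_cases hj : d j = 0
    · rw [hw'.eq_zero (i := j) (by simp [hij.symm, hj])]
      exact zero_mem _
    have hi := hneg i
    have hj' : 1 ≤ d j := by have := hneg j; omega
    have hsq : 0 < (d 0 + d 1 + d 2) ^ 2 - (d 0 ^ 2 + d 1 ^ 2 + d 2 ^ 2) := by
      fin_cases i <;> fin_cases j <;> simp at hij hle hj' <;> nlinarith [mul_nonneg hd0 hd1,
        mul_nonneg hd0 hd2, mul_nonneg hd1 hd2]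
    have hk1 : 1 ≤ k := by omega
    refine ihk (k - 1) (by omega) _ _ ?_ ?_ hw' (h.map_E i j)
    · fin_cases i <;> fin_cases j <;> simp at hij ⊢ <;> omega
    · push_cast [hk1]
      fin_cases i <;> fin_cases j <;> simp at hij hle ⊢ <;> nlinarith
  -- The scalar left over in `sum_gram_lap` after removing all terms already known to be in `A R`.
  set c : ℤ := d 0 ^ 2 + d 1 ^ 2 + d 2 ^ 2 - (d 0 + d 1 + d 2) +
    |d 0 - d 1| + |d 0 - d 2| + |d 1 - d 2| with hcdef
  have hc : c • P ∈ A R := by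
    have h1 : ∑ i, ∑ j, gram i j * lap i j P ∈ A R :=
      sum_mem fun i _ => sum_mem fun j _ => mul_mem (gram_mem i j) (hlap i j)
    have h01 := pair_mem hw (i := 0) (j := 1) (by decide) hE
    have h02 := pair_mem hw (i := 0) (j := 2) (by decide) hE
    have h12 := pair_mem hw (i := 1) (j := 2) (by decide) hE
    have := sub_mem (sub_mem (sub_mem h1 h01) h02) h12
    convert! this using 1
    rw [sum_gram_lap h]
    simp only [Fin.sum_univ_three, hw _, map_zsmul, hcdef]
    module
  by_cases hc0 : c = 0
  · have q0 : d 0 ≤ d 0 ^ 2 := by nlinarith [Int.le_self_sq (d 0)]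
    have q1 : d 1 ≤ d 1 ^ 2 := by nlinarith [Int.le_self_sq (d 1)]
    have q2 : d 2 ≤ d 2 ^ 2 := by nlinarith [Int.le_self_sq (d 2)]
    have a0 := abs_nonneg (d 0 - d 1)
    have a1 := abs_nonneg (d 0 - d 2)
    have a2 := abs_nonneg (d 1 - d 2)
    have e1 : d 1 = d 0 := by
      have : |d 0 - d 1| = 0 := by omega
      have := abs_eq_zero.1 this
      omega
    have e2 : d 2 = d 0 := by
      have : |d 0 - d 2| = 0 := by omega
      have := abs_eq_zero.1 this
      omega
    have hz : d 0 * (d 0 - 1) = 0 := by linarith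
    rcases mul_eq_zero.1 hz with hz | hz
    · rw [hw.eq_C (fun i => by fin_cases i <;> simp [e1, e2, hz])]
      exact Subalgebra.algebraMap_mem _ _
    · have hz : d 0 = 1 := by omega
      exact trilinear (fun i => by fin_cases i <;> simp [e1, e2, hz]) hw h
  · exact mem_of_zsmul_mem hc0 hc

/-- The multidegree of a coordinate of the `i`-th vector is the `i`-th unit vector. -/
def wt (p : Fin 3 × Fin 3) : Fin 3 → ℕ := Pi.single p.2 1

omit [Algebra ℚ R] in
lemma wt_weight (m : Fin 3 × Fin 3 →₀ ℕ) (i : Fin 3) :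
    Finsupp.weight wt m i = ∑ a, m (a, i) := by
  rw [Finsupp.weight_apply, Finsupp.sum_fintype _ _ (by simp)]
  simp [wt, Fintype.sum_prod_type, Fin.sum_univ_three, Pi.single_apply]

omit [Algebra ℚ R] in
lemma component_L (n : Fin 3 → ℕ) (a b : Fin 3) (P : Vec R) :
    weightedHomogeneousComponent wt n (L a b P) =
      L a b (weightedHomogeneousComponent wt n P) := by
  classical
  induction P using MvPolynomial.induction_on' with
  | add p q hp hq => simp only [map_add, hp, hq]
  | monomial m r =>
    have hm : IsWeightedHomogeneous wt (monomial m r) (Finsupp.weight wt m) :=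
      isWeightedHomogeneous_monomial _ _ _ rfl
    have hL : IsWeightedHomogeneous wt (L a b (monomial m r)) (Finsupp.weight wt m) := by
      rw [L_apply]
      refine IsWeightedHomogeneous.sum _ _ _ fun i _ => ?_
      by_cases h0 : m (b, i) = 0
      · rw [pderiv_monomial, h0]
        simp [isWeightedHomogeneous_zero]
      · have hle : Finsupp.single (b, i) 1 ≤ m := by
          rw [Finsupp.single_le_iff]; omega
        have hwt : wt (a, i) + Finsupp.weight wt (m - Finsupp.single (b, i) 1) =
            Finsupp.weight wt m := by
          conv_rhs => rw [← tsub_add_cancel_of_le hle, map_add, Finsupp.weight_single, one_smul]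
          rw [add_comm]; rfl
        rw [← hwt, pderiv_monomial]
        exact (isWeightedHomogeneous_X R wt (a, i)).mul (isWeightedHomogeneous_monomial _ _ _ rfl)
    rw [weightedHomogeneousComponent_of_mem hm, weightedHomogeneousComponent_of_mem hL]
    split_ifs <;> simp

/-- First fundamental theorem for three vectors under the orthogonal Lie algebra, over an arbitrary
commutative `ℚ`-algebra. -/
theorem mem_of_inv {P : Vec R} (h : Inv P) : P ∈ A R := by
  rw [← sum_weightedHomogeneousComponent wt P]
  refine finsum_induction (· ∈ A R) (zero_mem _) (fun _ _ => add_mem) fun n => ?_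
  refine homogeneous_mem _ _ (fun i => (n i : ℤ)) _ (Int.self_le_toNat _) (Int.self_le_toNat _)
    (fun i => ?_) ⟨?_, ?_, ?_⟩
  · ext m
    rw [coeff_E, coeff_smul, natCast_zsmul]
    by_cases hm : coeff m (weightedHomogeneousComponent wt n P) = 0
    · simp [hm]
    · rw [← weightedHomogeneousComponent_isWeightedHomogeneous n P hm, wt_weight]
  · rw [← component_L, ← component_L, h.h01]
  · rw [← component_L, ← component_L, h.h02, map_neg]
  · rw [← component_L, ← component_L, h.h12, map_neg]

end Rat

end Operators

/-! ### From conjugation of matrices to the orthogonal Lie algebra -/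

section Transfer

variable {k : Type*} [Field k]

/-- The polynomial ring in the entries of three `2 × 2` matrices. -/
abbrev Mat (k : Type*) [Field k] := MvPolynomial (Fin 3 × Fin 2 × Fin 2) k

/-- The derivation of `Mat k` induced by the infinitesimal conjugation `aᵢ ↦ B aᵢ - aᵢ B`. -/
noncomputable def conjD (B : Matrix (Fin 2) (Fin 2) k) : Derivation k (Mat k) (Mat k) :=
  mkDerivation k fun p =>
    (B.map C * genA p.1 - genA p.1 * B.map C : Matrix (Fin 2) (Fin 2) (Mat k)) p.2.1 p.2.2

/-- Conjugation of the three generic matrices by `1 + s B`, where `B ^ 2 = 0` and `s` is an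
indeterminate; the inverse of `1 + s B` is `1 - s B`. -/
noncomputable def conjHom (B : Matrix (Fin 2) (Fin 2) k) : Mat k →ₐ[k] Polynomial (Mat k) :=
  aeval fun p => Polynomial.C (X p) + Polynomial.X * Polynomial.C (conjD B (X p)) -
    Polynomial.X ^ 2 * Polynomial.C
      ((B.map C * genA p.1 * B.map C : Matrix (Fin 2) (Fin 2) (Mat k)) p.2.1 p.2.2)

/-- `conjHom B f = f + s (conjD B f) + O(s²)`. -/
lemma conjHom_coeff (B : Matrix (Fin 2) (Fin 2) k) (f : Mat k) :
    (conjHom B f).coeff 0 = f ∧ (conjHom B f).coeff 1 = conjD B f := by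
  induction f using MvPolynomial.induction_on with
  | C a => simp [conjHom, ← algebraMap_eq, Polynomial.algebraMap_apply, Polynomial.coeff_C]
  | add p q hp hq => simp [hp.1, hp.2, hq.1, hq.2]
  | mul_X f p hf =>
    have h0 : (conjHom B (X p)).coeff 0 = X p := by simp [conjHom, pow_two, mul_assoc]
    have h1 : (conjHom B (X p)).coeff 1 = conjD B (X p) := by
      simp [conjHom, pow_two, mul_assoc, Polynomial.mul_coeff_one, Polynomial.coeff_C]
    rw [map_mul, Polynomial.mul_coeff_zero, Polynomial.mul_coeff_one, hf.1, hf.2, h0, h1,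
      Derivation.leibniz, smul_eq_mul, smul_eq_mul]
    exact ⟨rfl, by ring⟩

lemma eval_conjHom (B : Matrix (Fin 2) (Fin 2) k) (s : k)
    (a : Fin 3 → Matrix (Fin 2) (Fin 2) k) (f : Mat k) :
    eval (fun p : Fin 3 × Fin 2 × Fin 2 => a p.1 p.2.1 p.2.2)
      (Polynomial.eval (C s) (conjHom B f)) =
    eval (fun p : Fin 3 × Fin 2 × Fin 2 =>
      ((1 + s • B) * a p.1 * (1 - s • B)) p.2.1 p.2.2) f := by
  induction f using MvPolynomial.induction_on with
  | C c => simp [conjHom, ← algebraMap_eq, Polynomial.algebraMap_apply]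
  | add p q hp hq => simp only [map_add, Polynomial.eval_add, hp, hq]
  | mul_X f p hf =>
    rw [map_mul, Polynomial.eval_mul, map_mul, hf, map_mul]
    congr 1
    obtain ⟨i, r, c⟩ := p
    fin_cases r <;> fin_cases c <;>
      simp [conjHom, conjD, mkDerivation_X, genA, Matrix.mul_apply, Matrix.sub_apply,
        Fin.sum_univ_two] <;> ring

/-- Invariance under the one-parameter unipotent groups `1 + s B` gives infinitesimal invariance
under their generators. -/
lemma conjD_eq_zero [CharZero k] {P : Mat k}
    (hP : ∀ (g : (Matrix (Fin 2) (Fin 2) k)ˣ) (a : Fin 3 → Matrix (Fin 2) (Fin 2) k),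
      eval (fun p : Fin 3 × Fin 2 × Fin 2 =>
        ((g : Matrix (Fin 2) (Fin 2) k) * a p.1 * (↑g⁻¹ : Matrix (Fin 2) (Fin 2) k)) p.2.1 p.2.2) P
        = eval (fun p : Fin 3 × Fin 2 × Fin 2 => a p.1 p.2.1 p.2.2) P)
    {B : Matrix (Fin 2) (Fin 2) k} (hB : B * B = 0) : conjD B P = 0 := by
  have hs (s : k) : Polynomial.eval (C s) (conjHom B P) = P := by
    refine MvPolynomial.funext fun x => ?_
    let g : (Matrix (Fin 2) (Fin 2) k)ˣ :=
      ⟨1 + s • B, 1 - s • B, by simp [mul_sub, add_mul, hB], by simp [mul_add, sub_mul, hB]⟩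
    exact (eval_conjHom B s (fun i => Matrix.of fun r c => x (i, r, c)) P).trans
      (hP g fun i => Matrix.of fun r c => x (i, r, c))
  have hc : conjHom B P = Polynomial.C P := by
    refine Polynomial.eq_of_infinite_eval_eq _ _ ?_
    refine (Set.infinite_range_of_injective (C_injective (Fin 3 × Fin 2 × Fin 2) k)).mono ?_
    rintro _ ⟨s, rfl⟩
    simp [hs]
  rw [← (conjHom_coeff B P).2, hc, Polynomial.coeff_C_of_ne_zero one_ne_zero]

/-- Coordinates adapted to `M₂ = k ⊕ sl₂`: the `i`-th matrix is
`(tᵢ / 2) I + !![x₀, x₁ + x₂; x₁ - x₂, -x₀]`, with the traces `tᵢ` in the coefficient ring. Then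
`x₀² + x₁² - x₂²` is half the trace of the square of the traceless part. -/
noncomputable def toVec : Mat k →ₐ[k] Vec (MvPolynomial (Fin 3) k) :=
  aeval fun p =>
    !![C (C (1 / 2) * X p.1) + X (0, p.1), X (1, p.1) + X (2, p.1);
      X (1, p.1) - X (2, p.1), C (C (1 / 2) * X p.1) - X (0, p.1)] p.2.1 p.2.2

/-- The coordinates `x₀, x₁, x₂` of the traceless part of the `i`-th generic matrix. -/
noncomputable def coord (p : Fin 3 × Fin 3) : Mat k :=
  ![C (1 / 2) * (X (p.2, 0, 0) - X (p.2, 1, 1)), C (1 / 2) * (X (p.2, 0, 1) + X (p.2, 1, 0)),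
    C (1 / 2) * (X (p.2, 0, 1) - X (p.2, 1, 0))] p.1

/-- The inverse change of coordinates of `toVec`. -/
noncomputable def ofVec : Vec (MvPolynomial (Fin 3) k) →+* Mat k :=
  eval₂Hom (aeval fun i => Matrix.trace (genA i) : MvPolynomial (Fin 3) k →ₐ[k] Mat k).toRingHom
    coord

lemma half_add_half [CharZero k] : (C (1 / 2) : Mat k) * 2 = 1 := by
  rw [show (2 : Mat k) = C 2 from (map_ofNat C 2).symm, ← map_mul]
  norm_num

lemma ofVec_C (r : MvPolynomial (Fin 3) k) :
    ofVec (C r) = aeval (fun i => Matrix.trace (genA i : Matrix (Fin 2) (Fin 2) (Mat k))) r := by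
  rw [ofVec, coe_eval₂Hom, eval₂_C]
  rfl

lemma ofVec_X (p : Fin 3 × Fin 3) : ofVec (X p) = (coord p : Mat k) := by
  rw [ofVec, coe_eval₂Hom, eval₂_X]

lemma toVec_C (a : k) : toVec (C a) = C (C a) := by
  rw [← algebraMap_eq, AlgHom.commutes]
  rfl

lemma toVec_X (p : Fin 3 × Fin 2 × Fin 2) : (toVec (X p) : Vec (MvPolynomial (Fin 3) k)) =
    !![C (C (1 / 2) * X p.1) + X (0, p.1), X (1, p.1) + X (2, p.1);
      X (1, p.1) - X (2, p.1), C (C (1 / 2) * X p.1) - X (0, p.1)] p.2.1 p.2.2 := by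
  rw [toVec, aeval_X]

lemma coord_zero (i : Fin 3) :
    (coord (0, i) : Mat k) = C (1 / 2) * (X (i, 0, 0) - X (i, 1, 1)) := rfl

lemma coord_one (i : Fin 3) :
    (coord (1, i) : Mat k) = C (1 / 2) * (X (i, 0, 1) + X (i, 1, 0)) := rfl

lemma coord_two (i : Fin 3) :
    (coord (2, i) : Mat k) = C (1 / 2) * (X (i, 0, 1) - X (i, 1, 0)) := rfl

lemma ofVec_toVec_X [CharZero k] (i : Fin 3) (r c : Fin 2) :
    ofVec (toVec (X (i, r, c))) = (X (i, r, c) : Mat k) := by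
  have h2 := half_add_half (k := k)
  have hC : ofVec (C (C (1 / 2) * X i)) =
      (C (1 / 2) * (X (i, 0, 0) + X (i, 1, 1)) : Mat k) := by
    rw [ofVec_C, map_mul, aeval_X, Matrix.trace_fin_two, ← algebraMap_eq, AlgHom.commutes]
    rfl
  rw [toVec_X]
  revert r c
  simp only [Fin.forall_fin_two, Matrix.of_apply, Matrix.cons_val_zero, Matrix.cons_val_one,
    map_add, map_sub, ofVec_X, hC, coord_zero, coord_one, coord_two]
  generalize (C (1 / 2) : Mat k) = z at h2
  refine ⟨⟨?_, ?_⟩, ?_, ?_⟩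
  · linear_combination X (i, 0, 0) * h2
  · linear_combination X (i, 0, 1) * h2
  · linear_combination X (i, 1, 0) * h2
  · linear_combination X (i, 1, 1) * h2

lemma ofVec_toVec [CharZero k] (P : Mat k) : ofVec (toVec P) = P := by
  induction P using MvPolynomial.induction_on with
  | C a =>
    rw [toVec_C, ofVec_C, ← algebraMap_eq, AlgHom.commutes]
    rfl
  | add p q hp hq => rw [map_add, map_add, hp, hq]
  | mul_X f p hf => rw [map_mul, map_mul, hf, ofVec_toVec_X]

/-- It suffices to check on variables that `toVec` intertwines `conjD B` with a derivation. -/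
lemma intertwine {δ : Derivation (MvPolynomial (Fin 3) k) (Vec (MvPolynomial (Fin 3) k))
      (Vec (MvPolynomial (Fin 3) k))} {B : Matrix (Fin 2) (Fin 2) k}
    (h : ∀ p, δ (toVec (X p)) = toVec (conjD B (X p))) (f : Mat k) :
    δ (toVec f) = toVec (conjD B f) := by
  induction f using MvPolynomial.induction_on with
  | C a =>
    rw [← algebraMap_eq, AlgHom.commutes, Derivation.map_algebraMap, map_zero,
      MvPolynomial.algebraMap_apply, ← algebraMap_eq, Derivation.map_algebraMap]
  | add p q hp hq => simp only [map_add, hp, hq]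
  | mul_X f p hf =>
    simp only [map_mul, Derivation.leibniz, smul_eq_mul, map_add, hf, h]

/-- The three nilpotent matrices used here span `sl₂`, so their infinitesimal conjugations span the
orthogonal Lie algebra of `x₀² + x₁² - x₂²`. -/
lemma inv_toVec [CharZero k] {P : Mat k}
    (h : ∀ B : Matrix (Fin 2) (Fin 2) k, B * B = 0 → conjD B P = 0) : Inv (toVec P) := by
  have hC : (C (C 2⁻¹) : Vec (MvPolynomial (Fin 3) k)) * 2 = 1 := by
    rw [show (2 : Vec (MvPolynomial (Fin 3) k)) = C (C 2) by rw [map_ofNat, map_ofNat], ← map_mul, ← map_mul]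
    norm_num
  have h1 := intertwine (k := k) (B := !![0, 1; 0, 0]) (δ := L 1 0 - L 2 0 - L 0 1 - L 0 2) (by
    rintro ⟨i, r, c⟩
    fin_cases r <;> fin_cases c <;>
      simp [toVec_X, conjD, mkDerivation_X, genA, Matrix.mul_apply, Fin.sum_univ_two, L_X] <;> ring) P
  have h2 := intertwine (k := k) (B := !![0, 0; 1, 0]) (δ := L 0 1 - L 1 0 - L 2 0 - L 0 2) (by
    rintro ⟨i, r, c⟩
    fin_cases r <;> fin_cases c <;>
      simp [toVec_X, conjD, mkDerivation_X, genA, Matrix.mul_apply, Fin.sum_univ_two, L_X] <;> ring) P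
  have h3 := intertwine (k := k) (B := !![1, -1; 1, -1])
    (δ := (2 : ℤ) • (L 2 1 + L 1 2 - L 1 0 + L 0 1)) (by
    rintro ⟨i, r, c⟩
    fin_cases r <;> fin_cases c <;>
      simp [toVec_X, conjD, mkDerivation_X, genA, Matrix.mul_apply, Fin.sum_univ_two, L_X] <;> ring) P
  rw [h _ (by simp [← Matrix.ext_iff, Fin.forall_fin_two]), map_zero] at h1 h2 h3
  simp only [Derivation.sub_apply, Derivation.add_apply, Derivation.smul_apply] at h1 h2 h3
  have e01 : L 0 1 (toVec P) = L 1 0 (toVec P) := by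
    linear_combination C (C 2⁻¹) * (h2 - h1) - (L 0 1 (toVec P) - L 1 0 (toVec P)) * hC
  refine ⟨e01, ?_, ?_⟩
  · linear_combination C (C 2⁻¹) * (-h2 - h1) - (L 0 2 (toVec P) + L 2 0 (toVec P)) * hC
  · rw [e01] at h3
    simp only [zsmul_eq_mul] at h3
    push_cast at h3
    linear_combination C (C 2⁻¹) * h3 - (L 1 2 (toVec P) + L 2 1 (toVec P)) * hC

end Transfer

/-! ### The generators in matrix form -/

section Generators

variable {k : Type*} [Field k]

lemma genB_eq [CharZero k] (i : Fin 3) : (genB i : Matrix (Fin 2) (Fin 2) (Mat k)) =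
    !![coord (0, i), coord (1, i) + coord (2, i); coord (1, i) - coord (2, i), -coord (0, i)] := by
  have h2 := half_add_half (k := k)
  rw [coord_zero, coord_one, coord_two, genB, Matrix.trace_fin_two, smul_eq_C_mul]
  generalize (C (1 / 2) : Mat k) = z at h2
  simp only [← Matrix.ext_iff, Fin.forall_fin_two, genA, Matrix.of_apply, Matrix.sub_apply,
    Matrix.smul_apply, Matrix.cons_val_zero, Matrix.cons_val_one, smul_eq_mul, Matrix.one_apply_eq,
    Matrix.one_apply_ne zero_ne_one, Matrix.one_apply_ne one_ne_zero]
  refine ⟨⟨?_, ?_⟩, ?_, ?_⟩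
  · linear_combination -X (i, 0, 0) * h2
  · linear_combination -X (i, 0, 1) * h2
  · linear_combination -X (i, 1, 0) * h2
  · linear_combination -X (i, 1, 1) * h2

lemma two_mul_ofVec_gram [CharZero k] (i j : Fin 3) :
    2 * ofVec (gram i j) = Matrix.trace (genB i * genB j : Matrix (Fin 2) (Fin 2) (Mat k)) := by
  simp only [gram, map_add, map_sub, map_mul, ofVec_X, genB_eq, Matrix.mul_fin_two,
    Matrix.trace_fin_two_of]
  ring

lemma sum_perm_three {M : Type*} [AddCommGroup M] (f : Fin 3 → Fin 3 → Fin 3 → M) :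
    ∑ σ : Equiv.Perm (Fin 3), (Equiv.Perm.sign σ : ℤ) • f (σ 0) (σ 1) (σ 2) =
      f 0 1 2 - f 0 2 1 - f 1 0 2 + f 1 2 0 + f 2 0 1 - f 2 1 0 := by
  have hu : (Finset.univ : Finset (Equiv.Perm (Fin 3))) =
      {1, Equiv.swap 1 2, Equiv.swap 0 1, Equiv.swap 0 1 * Equiv.swap 1 2,
        Equiv.swap 1 2 * Equiv.swap 0 1, Equiv.swap 0 2} := by decide
  rw [hu, Finset.sum_insert (by decide), Finset.sum_insert (by decide),
    Finset.sum_insert (by decide), Finset.sum_insert (by decide), Finset.sum_insert (by decide),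
    Finset.sum_singleton]
  have e (σ : Equiv.Perm (Fin 3)) (s : ℤˣ) (a b c : Fin 3)
      (h : Equiv.Perm.sign σ = s ∧ σ 0 = a ∧ σ 1 = b ∧ σ 2 = c) :
      (Equiv.Perm.sign σ : ℤ) • f (σ 0) (σ 1) (σ 2) = (s : ℤ) • f a b c := by
    rw [h.1, h.2.1, h.2.2.1, h.2.2.2]
  rw [e 1 1 0 1 2 (by decide), e (Equiv.swap 1 2) (-1) 0 2 1 (by decide),
    e (Equiv.swap 0 1) (-1) 1 0 2 (by decide),
    e (Equiv.swap 0 1 * Equiv.swap 1 2) 1 1 2 0 (by decide),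
    e (Equiv.swap 1 2 * Equiv.swap 0 1) 1 2 0 1 (by decide),
    e (Equiv.swap 0 2) (-1) 2 1 0 (by decide)]
  simp only [Units.val_neg, Units.val_one, one_smul, neg_smul]
  abel

lemma ofVec_vol [CharZero k] : -12 * ofVec vol = ∑ σ : Equiv.Perm (Fin 3), (Equiv.Perm.sign σ : ℤ) •
    Matrix.trace (genB (σ 0) * genB (σ 1) * genB (σ 2) : Matrix (Fin 2) (Fin 2) (Mat k)) := by
  rw [sum_perm_three fun a b c =>
    Matrix.trace (genB a * genB b * genB c : Matrix (Fin 2) (Fin 2) (Mat k))]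
  simp only [vol, map_add, map_sub, map_mul, ofVec_X, genB_eq, Matrix.mul_fin_two,
    Matrix.trace_fin_two_of]
  ring

/-- Division by a nonzero scalar stays in a `k`-subalgebra. -/
lemma mem_of_scalar_mul {S : Subalgebra k (Mat k)} {c : k} (hc : c ≠ 0) {f : Mat k}
    (h : C c * f ∈ S) : f ∈ S := by
  have := S.smul_mem h c⁻¹
  rwa [smul_eq_C_mul, ← mul_assoc, ← map_mul, inv_mul_cancel₀ hc, map_one, one_mul] at this

end Generators

end FFT

/-- First fundamental theorem for triples of 2×2 matrices under simultaneous conjugation: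
every conjugation-invariant polynomial in the 12 entries of `a₁, a₂, a₃` lies in the
subalgebra generated by `uᵢ = tr(aᵢ)`, `vᵢⱼ = tr(bᵢbⱼ)` and
`w = ∑_{σ ∈ S₃} ε(σ) tr(b_{σ(1)} b_{σ(2)} b_{σ(3)})`, where `bᵢ = aᵢ - (1/2) tr(aᵢ)·I`. -/
theorem stmt_12 {k : Type*} [Field k] [CharZero k]
    (P : MvPolynomial (Fin 3 × Fin 2 × Fin 2) k)
    (hP : ∀ (g : (Matrix (Fin 2) (Fin 2) k)ˣ) (a : Fin 3 → Matrix (Fin 2) (Fin 2) k),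
      MvPolynomial.eval
          (fun p : Fin 3 × Fin 2 × Fin 2 =>
            ((g : Matrix (Fin 2) (Fin 2) k) * a p.1 * (↑g⁻¹ : Matrix (Fin 2) (Fin 2) k))
              p.2.1 p.2.2) P
        = MvPolynomial.eval (fun p : Fin 3 × Fin 2 × Fin 2 => a p.1 p.2.1 p.2.2) P) :
    P ∈ Algebra.adjoin k
      {q : MvPolynomial (Fin 3 × Fin 2 × Fin 2) k |
        (∃ i : Fin 3, q = Matrix.trace (genA (k := k) i)) ∨
        (∃ i j : Fin 3, q = Matrix.trace (genB (k := k) i * genB (k := k) j)) ∨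
        q = ∑ σ : Equiv.Perm (Fin 3), (Equiv.Perm.sign σ : ℤ) •
              Matrix.trace (genB (k := k) (σ 0) * genB (k := k) (σ 1) * genB (k := k) (σ 2))} := by
  have key := FFT.mem_of_inv (FFT.inv_toVec fun B hB => FFT.conjD_eq_zero hP hB)
  rw [← FFT.ofVec_toVec P]
  generalize FFT.toVec P = Q at key
  induction key using Algebra.adjoin_induction with
  | mem x hx =>
    obtain ⟨i, j, rfl⟩ | rfl := hx
    · refine FFT.mem_of_scalar_mul (two_ne_zero : (2 : k) ≠ 0) (Algebra.subset_adjoin ?_)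
      rw [map_ofNat]
      exact Or.inr (Or.inl ⟨i, j, FFT.two_mul_ofVec_gram i j⟩)
    · refine FFT.mem_of_scalar_mul (c := (-12 : k)) (by norm_num) (Algebra.subset_adjoin ?_)
      rw [map_neg, map_ofNat]
      exact Or.inr (Or.inr FFT.ofVec_vol)
  | algebraMap r =>
    rw [algebraMap_eq, FFT.ofVec_C]
    induction r using MvPolynomial.induction_on with
    | C a => rw [← algebraMap_eq, AlgHom.commutes]; exact Subalgebra.algebraMap_mem _ a
    | add p q hp hq => rw [map_add]; exact add_mem hp hq
    | mul_X p i hp =>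
      rw [map_mul, aeval_X]
      exact mul_mem hp (Algebra.subset_adjoin (Or.inl ⟨i, rfl⟩))
  | add x y _ _ hx hy => rw [map_add]; exact add_mem hx hy
  | mul x y _ _ hx hy => rw [map_mul]; exact mul_mem hx hy
end

section
/- Let k be a field of characteristic zero. Let φ be the k-algebra homomorphism from the polynomial ring k[U₁, U₂, U₃, V₁₁, V₁₂, V₁₃, V₂₂, V₂₃, V₃₃, W] to the polynomial ring in the 12 entries of three 2×2 matrices a₁, a₂, a₃, sending Uᵢ ↦ tr(aᵢ), V_{ij} ↦ tr(bᵢbⱼ) and W ↦ Σ_{σ∈S₃} ε(σ)·tr(b_{σ(1)} b_{σ(2)} b_{σ(3)}), where bᵢ = aᵢ − (1/2)tr(aᵢ)·I. Then the kernel of φ is the principal ideal generated by W² + 18·(V₁₁V₂₂V₃₃ + 2V₁₂V₁₃V₂₃ − V₃₃V₁₂² − V₂₂V₁₃² − V₁₁V₂₃²). -/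
/-!
The kernel contains the relation by a direct computation with traceless 2×2 matrices. For the
converse, modulo the relation every polynomial is congruent to `c W + d` with `c, d` polynomials
in the `U`s and `V`s only (`exists_reduced`). Over the algebraic closure `K` of `k`, the trace form
on traceless matrices is twice the standard form on `K³`, so a Cholesky factorisation realises a
generic symmetric matrix `V` as a matrix `(tr bᵢbⱼ)` (`exists_points`). Changing the sign of the
last coordinate changes the sign of `W`. If `c W + d` is in the kernel, then `c(v) w + d(v)` and
`-c(v) w + d(v)` both vanish for generic `v`, with `w ≠ 0`. So `c` and `d` vanish at all generic
points, and as `K` is infinite both are zero.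
-/

open Matrix MvPolynomial

/-- The sum over `S₃` written out. -/
lemma sum_perm_three {R : Type*} [Ring R] (f : Fin 3 → Fin 3 → Fin 3 → R) :
    ∑ σ : Equiv.Perm (Fin 3), (Equiv.Perm.sign σ : ℤ) • f (σ 0) (σ 1) (σ 2)
      = f 0 1 2 - f 1 0 2 - f 2 1 0 - f 0 2 1 + f 1 2 0 + f 2 0 1 := by
  have h : (Finset.univ : Finset (Equiv.Perm (Fin 3))) =
      {1, Equiv.swap 0 1, Equiv.swap 0 2, Equiv.swap 1 2,
        Equiv.swap 0 1 * Equiv.swap 1 2, Equiv.swap 1 2 * Equiv.swap 0 1} := by decide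
  have e1 : (Equiv.swap 0 1 : Equiv.Perm (Fin 3)) 2 = 2 := by decide
  have e2 : (Equiv.swap 0 2 : Equiv.Perm (Fin 3)) 1 = 1 := by decide
  have e3 : (Equiv.swap 1 2 : Equiv.Perm (Fin 3)) 0 = 0 := by decide
  rw [h, Finset.sum_insert (by decide), Finset.sum_insert (by decide),
    Finset.sum_insert (by decide), Finset.sum_insert (by decide),
    Finset.sum_insert (by decide), Finset.sum_singleton]
  simp [e1, e2, e3]
  abel

/-- The images of the ten variables `U, V, W`. -/
noncomputable def gens (k : Type*) [Field k] : Fin 10 → MvPolynomial (Fin 3 × Fin 2 × Fin 2) k :=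
  ![Matrix.trace (genA (k := k) 0), Matrix.trace (genA (k := k) 1),
    Matrix.trace (genA (k := k) 2),
    Matrix.trace (genB (k := k) 0 * genB (k := k) 0),
    Matrix.trace (genB (k := k) 0 * genB (k := k) 1),
    Matrix.trace (genB (k := k) 0 * genB (k := k) 2),
    Matrix.trace (genB (k := k) 1 * genB (k := k) 1),
    Matrix.trace (genB (k := k) 1 * genB (k := k) 2),
    Matrix.trace (genB (k := k) 2 * genB (k := k) 2),
    ∑ σ : Equiv.Perm (Fin 3), (Equiv.Perm.sign σ : ℤ) •
      Matrix.trace (genB (k := k) (σ 0) * genB (k := k) (σ 1) * genB (k := k) (σ 2))]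

/-- The determinant of the symmetric matrix `(Vᵢⱼ)`, as a function of the nine values of
`U₁, U₂, U₃, V₁₁, V₁₂, V₁₃, V₂₂, V₂₃, V₃₃`. -/
def gramDet {R : Type*} [CommRing R] (v : Fin 9 → R) : R :=
  v 3 * v 6 * v 8 + 2 * v 4 * v 5 * v 7 - v 8 * v 4 ^ 2 - v 6 * v 5 ^ 2 - v 3 * v 7 ^ 2

/-- The relation `W² + 18 det (Vᵢⱼ)`. -/
noncomputable def rel (k : Type*) [Field k] : MvPolynomial (Fin 10) k :=
  X 9 ^ 2 + 18 * (X 3 * X 6 * X 8 + 2 * X 4 * X 5 * X 7 - X 8 * X 4 ^ 2 - X 6 * X 5 ^ 2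
    - X 3 * X 7 ^ 2)

lemma genB_eq {k : Type*} [Field k] [CharZero k] (i : Fin 3) :
    genB (k := k) i = !![C (1 / 2) * (X (i, 0, 0) - X (i, 1, 1)), X (i, 0, 1);
      X (i, 1, 0), -(C (1 / 2) * (X (i, 0, 0) - X (i, 1, 1)))] := by
  have h : (C (1 / 2) : MvPolynomial (Fin 3 × Fin 2 × Fin 2) k) * 2 = 1 := by
    rw [← map_ofNat (C : k →+* MvPolynomial (Fin 3 × Fin 2 × Fin 2) k) 2, ← C_mul]
    norm_num
  ext1 r c
  fin_cases r <;> fin_cases c <;>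
    simp only [genB, genA, Matrix.trace_fin_two, MvPolynomial.smul_eq_C_mul, Matrix.sub_apply,
      Matrix.smul_apply, Matrix.of_apply, smul_eq_mul] <;>
    simp [-map_inv₀, -one_div]
  · linear_combination (-X (i, 0, 0)) * h
  · linear_combination (-X (i, 1, 1)) * h

/-- Half the difference of the diagonal entries of `aᵢ`, the upper left entry of `bᵢ`. -/
noncomputable def diagB (k : Type*) [Field k] (i : Fin 3) :
    MvPolynomial (Fin 3 × Fin 2 × Fin 2) k :=
  C (1 / 2) * (X (i, 0, 0) - X (i, 1, 1))

lemma trace_genB_mul {k : Type*} [Field k] [CharZero k] (i j : Fin 3) :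
    Matrix.trace (genB (k := k) i * genB j) =
      2 * diagB k i * diagB k j + X (i, 0, 1) * X (j, 1, 0) + X (i, 1, 0) * X (j, 0, 1) := by
  rw [genB_eq, genB_eq, Matrix.mul_fin_two, Matrix.trace_fin_two_of]
  simp only [diagB]
  ring

/-- The image of `W` is six times the determinant of the coordinates of `b₁, b₂, b₃`. -/
lemma alternating_trace {k : Type*} [Field k] [CharZero k] :
    ∑ σ : Equiv.Perm (Fin 3), (Equiv.Perm.sign σ : ℤ) •
      Matrix.trace (genB (k := k) (σ 0) * genB (k := k) (σ 1) * genB (k := k) (σ 2)) =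
    6 * (diagB k 0 * (X (1, 0, 1) * X (2, 1, 0) - X (2, 0, 1) * X (1, 1, 0))
      + X (0, 0, 1) * (X (1, 1, 0) * diagB k 2 - diagB k 1 * X (2, 1, 0))
      + X (0, 1, 0) * (diagB k 1 * X (2, 0, 1) - diagB k 2 * X (1, 0, 1))) := by
  rw [sum_perm_three (fun i j l => Matrix.trace (genB (k := k) i * genB j * genB l))]
  simp only [genB_eq, Matrix.mul_fin_two, Matrix.trace_fin_two_of, diagB]
  ring

lemma aeval_gens_rel (k : Type*) [Field k] [CharZero k] : aeval (gens k) (rel k) = 0 := by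
  simp only [rel, map_add, map_sub, map_mul, map_pow, aeval_X, map_ofNat]
  simp only [gens, alternating_trace, trace_genB_mul, Matrix.cons_val]
  ring

/-- Division with remainder by the relation, viewed as a monic quadratic in `W`. -/
lemma exists_reduced {k : Type*} [Field k] (p : MvPolynomial (Fin 10) k) :
    ∃ c d : MvPolynomial (Fin 9) k,
      p - (rename Fin.castSucc c * X 9 + rename Fin.castSucc d) ∈ Ideal.span {rel k} := by
  simp only [Ideal.mem_span_singleton]
  induction p using MvPolynomial.induction_on with
  | C a => exact ⟨0, C a, by simp⟩
  | add p q hp hq =>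
    obtain ⟨c, d, r, h⟩ := hp
    obtain ⟨c', d', r', h'⟩ := hq
    refine ⟨c + c', d + d', r + r', ?_⟩
    simp only [map_add]
    linear_combination h + h'
  | mul_X p i hp =>
    obtain ⟨c, d, r, h⟩ := hp
    induction i using Fin.lastCases with
    | last =>
      refine ⟨d, -18 * c * gramDet X, r * X 9 + rename Fin.castSucc c, ?_⟩
      simp only [gramDet, map_add, map_sub, map_mul, map_pow, map_neg, map_ofNat, rename_X]
      simp only [Fin.reduceCastSucc, Fin.reduceLast]
      unfold rel at h ⊢
      linear_combination h * X 9
    | cast j =>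
      refine ⟨c * X j, d * X j, r * X j.castSucc, ?_⟩
      simp only [map_mul, rename_X]
      linear_combination h * X j.castSucc

/-- The values of the ten generators on the matrices `bᵢ + (uᵢ/2) I`, where
`b₁, b₂, b₃` are lower triangular in the basis `diag(1,-1)`, `E₁₂ + E₂₁`, `J (E₁₂ - E₂₁)`,
which is orthogonal with all norms equal to `2`. -/
lemma exists_cholesky_point {k K : Type*} [Field k] [CharZero k] [Field K] [Algebra k K]
    (J : K) (hJ : J ^ 2 = -1) (u₁ u₂ u₃ l₁ l₂ p₂ l₃ p₃ q₃ : K) :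
    ∃ P : Fin 3 × Fin 2 × Fin 2 → K, (fun i => aeval P (gens k i)) =
      ![u₁, u₂, u₃, 2 * l₁ ^ 2, 2 * (l₁ * l₂), 2 * (l₁ * l₃), 2 * (l₂ ^ 2 + p₂ ^ 2),
        2 * (l₂ * l₃ + p₂ * p₃), 2 * (l₃ ^ 2 + p₃ ^ 2 + q₃ ^ 2), -12 * J * l₁ * p₂ * q₃] := by
  have : CharZero K := charZero_of_injective_algebraMap (algebraMap k K).injective
  have h2 : (algebraMap k K 2)⁻¹ = 1 / 2 := by
    rw [map_ofNat, one_div]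
  refine ⟨fun x => ![!![u₁ / 2 + l₁, 0; 0, u₁ / 2 - l₁], !![u₂ / 2 + l₂, p₂; p₂, u₂ / 2 - l₂],
    !![u₃ / 2 + l₃, p₃ + J * q₃; p₃ - J * q₃, u₃ / 2 - l₃]] x.1 x.2.1 x.2.2, ?_⟩
  rw [gens, alternating_trace]
  simp only [trace_genB_mul]
  simp only [diagB, genA, Matrix.trace_fin_two]
  ext i
  fin_cases i <;> simp [h2]
  -- only `tr (b₃ b₃)` involves `J ^ 2`
  all_goals first
    | ring1
    | linear_combination (-2 * q₃ ^ 2) * hJ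

/-- Both points of the hypersurface `w² = -18 det V` over a generic `(u, V)` are values of the
ten generators. -/
lemma exists_points {k K : Type*} [Field k] [CharZero k] [Field K] [Algebra k K] [IsAlgClosed K]
    (v : Fin 9 → K) (h₁ : v 3 ≠ 0) (h₂ : v 3 * v 6 - v 4 ^ 2 ≠ 0) (h₃ : gramDet v ≠ 0) :
    ∃ w : K, w ≠ 0 ∧
      (∃ P : Fin 3 × Fin 2 × Fin 2 → K, (fun i => aeval P (gens k i)) = Fin.snoc v w) ∧
      (∃ P : Fin 3 × Fin 2 × Fin 2 → K, (fun i => aeval P (gens k i)) = Fin.snoc v (-w)) := by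
  have : CharZero K := charZero_of_injective_algebraMap (algebraMap k K).injective
  obtain ⟨J, hJ⟩ := IsAlgClosed.exists_pow_nat_eq (-1 : K) (n := 2) (by norm_num)
  obtain ⟨l₁, hl₁⟩ := IsAlgClosed.exists_pow_nat_eq (v 3 / 2) (n := 2) (by norm_num)
  have l0 : l₁ ≠ 0 := by
    rintro rfl
    apply h₁
    linear_combination -2 * hl₁
  obtain ⟨l₂, hl₂⟩ : ∃ l₂, 2 * (l₁ * l₂) = v 4 := ⟨v 4 / (2 * l₁), by field_simp⟩
  obtain ⟨l₃, hl₃⟩ : ∃ l₃, 2 * (l₁ * l₃) = v 5 := ⟨v 5 / (2 * l₁), by field_simp⟩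
  obtain ⟨p₂, hp₂⟩ := IsAlgClosed.exists_pow_nat_eq (v 6 / 2 - l₂ ^ 2) (n := 2) (by norm_num)
  have e3 : v 3 = 2 * l₁ ^ 2 := by linear_combination -2 * hl₁
  have e6 : v 6 = 2 * (l₂ ^ 2 + p₂ ^ 2) := by linear_combination -2 * hp₂
  have p0 : p₂ ≠ 0 := by
    rintro rfl
    apply h₂
    rw [e3, e6, ← hl₂]
    ring
  obtain ⟨p₃, hp₃⟩ : ∃ p₃, 2 * (l₂ * l₃ + p₂ * p₃) = v 7 :=
    ⟨(v 7 / 2 - l₂ * l₃) / p₂, by field_simp; ring⟩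
  obtain ⟨q₃, hq₃⟩ := IsAlgClosed.exists_pow_nat_eq (v 8 / 2 - l₃ ^ 2 - p₃ ^ 2) (n := 2)
    (by norm_num)
  have e8 : v 8 = 2 * (l₃ ^ 2 + p₃ ^ 2 + q₃ ^ 2) := by linear_combination -2 * hq₃
  have q0 : q₃ ≠ 0 := by
    rintro rfl
    apply h₃
    rw [gramDet, e3, e6, e8, ← hl₂, ← hl₃, ← hp₃]
    ring
  have J0 : J ≠ 0 := by
    rintro rfl
    norm_num at hJ
  refine ⟨-12 * J * l₁ * p₂ * q₃, by simp [*], ?_, ?_⟩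
  · obtain ⟨P, hP⟩ := exists_cholesky_point (k := k) J hJ (v 0) (v 1) (v 2) l₁ l₂ p₂ l₃ p₃ q₃
    refine ⟨P, hP.trans ?_⟩
    rw [← e3, ← e6, ← e8, hl₂, hl₃, hp₃]
    ext i
    fin_cases i <;> rfl
  · obtain ⟨P, hP⟩ := exists_cholesky_point (k := k) J hJ (v 0) (v 1) (v 2) l₁ l₂ p₂ l₃ p₃ (-q₃)
    refine ⟨P, hP.trans ?_⟩
    rw [neg_sq, ← e3, ← e6, ← e8, hl₂, hl₃, hp₃, mul_neg]
    ext i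
    fin_cases i <;> rfl

/-- A polynomial over `k` vanishing at all points of `K⁹` with nonzero leading principal minors
of `V` is zero. -/
lemma eq_zero_of_generic {k K : Type*} [Field k] [CharZero k] [Field K] [Algebra k K]
    (d : MvPolynomial (Fin 9) k)
    (h : ∀ v : Fin 9 → K, v 3 ≠ 0 → v 3 * v 6 - v 4 ^ 2 ≠ 0 → gramDet v ≠ 0 → aeval v d = 0) :
    d = 0 := by
  have : CharZero K := charZero_of_injective_algebraMap (algebraMap k K).injective
  have hg : (X 3 * (X 3 * X 6 - X 4 ^ 2) * gramDet X : MvPolynomial (Fin 9) K) ≠ 0 := by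
    intro h0
    -- the minors are all `1` at the identity matrix
    have := congrArg (eval ![0, 0, 0, 1, 0, 0, 1, 0, 1]) h0
    simp [gramDet] at this
  have hm : map (algebraMap k K) d * (X 3 * (X 3 * X 6 - X 4 ^ 2) * gramDet X) = 0 := by
    apply MvPolynomial.funext
    intro v
    simp only [gramDet, map_mul, map_sub, map_add, map_pow, map_ofNat, eval_X, map_zero, eval_map]
    by_cases h₁ : v 3 = 0
    · simp [h₁]
    by_cases h₂ : v 3 * v 6 - v 4 ^ 2 = 0
    · simp [h₂]
    by_cases h₃ : gramDet v = 0
    · rw [gramDet] at h₃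
      simp [h₃]
    have := h v h₁ h₂ h₃
    rw [aeval_def] at this
    simp [this]
  have := (mul_eq_zero.mp hm).resolve_right hg
  exact map_injective _ (algebraMap k K).injective (by simpa using this)

/-- Second fundamental theorem for triples of 2×2 matrices under simultaneous conjugation:
the kernel of `k[U₁,U₂,U₃,V₁₁,V₁₂,V₁₃,V₂₂,V₂₃,V₃₃,W] → k[entries of a₁,a₂,a₃]`
(sending `Uᵢ ↦ tr(aᵢ)`, `Vᵢⱼ ↦ tr(bᵢbⱼ)`, `W ↦ ∑_σ ε(σ) tr(b_{σ(1)}b_{σ(2)}b_{σ(3)})`,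
where `bᵢ = aᵢ - (1/2)tr(aᵢ)·I`) is the principal ideal generated by
`W² + 18(V₁₁V₂₂V₃₃ + 2V₁₂V₁₃V₂₃ - V₃₃V₁₂² - V₂₂V₁₃² - V₁₁V₂₃²)`.
Variables are indexed so that `U₁,U₂,U₃ = X 0, X 1, X 2`,
`V₁₁,V₁₂,V₁₃,V₂₂,V₂₃,V₃₃ = X 3,…,X 8` and `W = X 9`. -/
theorem stmt_13 {k : Type*} [Field k] [CharZero k] :
    RingHom.ker (MvPolynomial.aeval
        (![Matrix.trace (genA (k := k) 0), Matrix.trace (genA (k := k) 1),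
           Matrix.trace (genA (k := k) 2),
           Matrix.trace (genB (k := k) 0 * genB (k := k) 0),
           Matrix.trace (genB (k := k) 0 * genB (k := k) 1),
           Matrix.trace (genB (k := k) 0 * genB (k := k) 2),
           Matrix.trace (genB (k := k) 1 * genB (k := k) 1),
           Matrix.trace (genB (k := k) 1 * genB (k := k) 2),
           Matrix.trace (genB (k := k) 2 * genB (k := k) 2),
           ∑ σ : Equiv.Perm (Fin 3), (Equiv.Perm.sign σ : ℤ) •
             Matrix.trace (genB (k := k) (σ 0) * genB (k := k) (σ 1) * genB (k := k) (σ 2))] :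
          Fin 10 → MvPolynomial (Fin 3 × Fin 2 × Fin 2) k)).toRingHom
      = Ideal.span {(MvPolynomial.X 9 ^ 2
          + 18 * (MvPolynomial.X 3 * MvPolynomial.X 6 * MvPolynomial.X 8
            + 2 * MvPolynomial.X 4 * MvPolynomial.X 5 * MvPolynomial.X 7
            - MvPolynomial.X 8 * MvPolynomial.X 4 ^ 2
            - MvPolynomial.X 6 * MvPolynomial.X 5 ^ 2
            - MvPolynomial.X 3 * MvPolynomial.X 7 ^ 2) :
            MvPolynomial (Fin 10) k)} := by
  change RingHom.ker (aeval (gens k)).toRingHom = Ideal.span {rel k}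
  apply le_antisymm
  · intro p hp
    have hp' : aeval (gens k) p = 0 := hp
    obtain ⟨c, d, h⟩ := exists_reduced p
    obtain ⟨r, hr⟩ := Ideal.mem_span_singleton.mp h
    have hcd : aeval (gens k) (rename Fin.castSucc c * X 9 + rename Fin.castSucc d) = 0 := by
      have := congrArg (aeval (gens k)) hr
      rw [map_sub, hp', map_mul, aeval_gens_rel, zero_mul, zero_sub, neg_eq_zero] at this
      exact this
    have key (v : Fin 9 → AlgebraicClosure k) (w : AlgebraicClosure k)
        (hP : ∃ P : Fin 3 × Fin 2 × Fin 2 → AlgebraicClosure k,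
          (fun i => aeval P (gens k i)) = Fin.snoc v w) :
        aeval v c * w + aeval v d = 0 := by
      obtain ⟨P, hP⟩ := hP
      have h1 := congrArg (aeval P) hcd
      rw [← AlgHom.comp_apply, comp_aeval, hP, map_add, map_mul, aeval_rename, aeval_rename,
        aeval_X, map_zero] at h1
      have h2 : (Fin.snoc v w : Fin 10 → AlgebraicClosure k) ∘ Fin.castSucc = v := by
        ext i
        simp
      rw [h2] at h1
      exact h1
    have both (v : Fin 9 → AlgebraicClosure k) (h₁ : v 3 ≠ 0) (h₂ : v 3 * v 6 - v 4 ^ 2 ≠ 0)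
        (h₃ : gramDet v ≠ 0) : aeval v c = 0 ∧ aeval v d = 0 := by
      obtain ⟨w, hw, hP, hP'⟩ := exists_points (k := k) v h₁ h₂ h₃
      have k1 := key v _ hP
      have k2 := key v _ hP'
      have hc : aeval v c * w = 0 := by linear_combination (k1 - k2) / 2
      exact ⟨(mul_eq_zero.mp hc).resolve_right hw, by linear_combination k1 - hc⟩
    have hc : c = 0 := eq_zero_of_generic c fun v h₁ h₂ h₃ => (both v h₁ h₂ h₃).1
    have hd : d = 0 := eq_zero_of_generic d fun v h₁ h₂ h₃ => (both v h₁ h₂ h₃).2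
    simpa [hc, hd] using h
  · rw [Ideal.span_singleton_le_iff_mem]
    exact aeval_gens_rel k
end

section
/- Let k be a field of characteristic zero. Let P be a polynomial function on pairs (x, y) of traceless 3×3 matrices over k (i.e. a polynomial in their entries, restricted to the subspace tr(x) = tr(y) = 0) that is invariant under simultaneous conjugation: P(g·x·g⁻¹, g·y·g⁻¹) = P(x, y) for every invertible 3×3 matrix g and all traceless x, y. Then P lies in the k-subalgebra generated by the nine functions tr(x²), tr(xy), tr(y²), tr(x³), tr(x²y), tr(xy²), tr(y³), v = tr(x²y²) − tr(xyxy), and w = tr(x²y²xy) − tr(y²x²yx). -/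
open Matrix

/-!
An invariant of pairs of matrices is a polynomial in the traces `tr(w(x, y))` of words `w`; for
traceless `3 × 3` matrices the Cayley–Hamilton identity reduces all of these to nine of them.

*The first fundamental theorem* (`invariant_mem`). The homogeneous components of an invariant are
invariant. A homogeneous polynomial of degree `d` in the entries of the matrices `z b` has a unique
coefficient family `q (c, I, J)` that is symmetric under `Fin d`-permutations, where `c` chooses the
matrices and `I`, `J` the entries. For fixed `c` the invariance says that the matrix `q (c, ·, ·)`
commutes with `g^{⊗d}` for every invertible `g` (`coeff_commute_tensorPow`). By Zariski density of
the invertible matrices it commutes with every operator that commutes with the symmetric group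
(`mul_comm_of_commute_tensorPow`), so by Maschke's theorem and the Jacobson density theorem it is a
linear combination of permutations (`double_centralizer`). A permutation contributes a product,
over its cycles, of traces of words (`permTrace_mem`).

*Reduction to nine generators* (`wordTr_mem`). The polarised Cayley–Hamilton theorem expresses the
sum over the six orderings of `abc` through products with fewer factors and traces. Hence any
linear functional that vanishes on the decomposable elements also vanishes on these symmetric sums.
Solving the resulting linear systems shows that every word of length six in two letters is a
combination of shorter words with trace coefficients (`word_six_eq_zero`, the Nagata–Higman bound),
and that the traces of words of length four and six are, modulo decomposables, multiples of
`v` and `w`, while those of length five are decomposable (`cyclic_four_eq_zero`,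
`cyclic_five_eq_zero`, `cyclic_six_eq_zero`).

A function on traceless pairs is extended to all pairs along the projection `z ↦ z - (tr z / 3)`.
-/

/-! ### Linear relations between words in two letters -/

/-- The sum of the values of `φ` over the six words obtained from `u a b c v` by permuting the
blocks `a`, `b`, `c`: the multilinear form of the cube `a³`, placed between `u` and `v`. -/
def symSum {k : Type*} [Field k] (φ : List Bool → k) (u a b c v : List Bool) : k :=
  φ (u ++ (a ++ (b ++ (c ++ v)))) + φ (u ++ (a ++ (c ++ (b ++ v)))) +
  φ (u ++ (b ++ (a ++ (c ++ v)))) + φ (u ++ (b ++ (c ++ (a ++ v)))) +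
  φ (u ++ (c ++ (a ++ (b ++ v)))) + φ (u ++ (c ++ (b ++ (a ++ v))))

/-- The Nagata–Higman theorem for cubes in the case of two letters: modulo the multilinear forms
of the cube, every word of length six vanishes. -/
theorem word_six_eq_zero {k : Type*} [Field k] [CharZero k] (φ : List Bool → k)
    (hφ : ∀ u a b c v : List Bool, (u ++ (a ++ (b ++ (c ++ v)))).length = 6 → a ≠ [] → b ≠ [] →
      c ≠ [] → symSum φ u a b c v = 0) (w : List Bool) (hw : w.length = 6) : φ w = 0 := by
  have r : ∀ u a b c v : List Bool,
      ((u ++ (a ++ (b ++ (c ++ v)))).length = 6 ∧ a ≠ [] ∧ b ≠ [] ∧ c ≠ []) →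
      symSum φ u a b c v = 0 := fun u a b c v h => hφ u a b c v h.1 h.2.1 h.2.2.1 h.2.2.2
  have cube : ∀ (u : List Bool) (s : Bool) (v : List Bool), u.length + v.length = 3 →
      φ (u ++ s :: s :: s :: v) = 0 := by
    intro u s v h
    have := r u [s] [s] [s] v ⟨by simp; omega, by simp, by simp, by simp⟩
    simp only [symSum, List.cons_append, List.nil_append] at this
    linear_combination (1 / 6 : k) * this
  -- The certificates below come from solving the linear system given by `hφ`.
  have h_sstsst (s t : Bool) : φ [s, s, t, s, s, t] = 0 := by
    have e0 := r [] [s] [s] [s, s, t] [t] (by simp)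
    have e1 := r [s, s, s] [s] [t] [t] [] (by simp)
    have e2 := r [] [s] [s] [s] [t, t, s] (by simp)
    simp only [symSum, List.cons_append, List.nil_append] at e0 e1 e2
    linear_combination (norm := ring1) 1 / 2 * e0 - 1 / 2 * e1 + 1 / 6 * e2
  have h_sststs (s t : Bool) : φ [s, s, t, s, t, s] = 0 := by
    have e0 := r [s] [s] [s, t] [s, t] [] (by simp)
    have e1 := r [] [s] [s] [s, s, t] [t] (by simp)
    have e2 := r [] [s] [s] [s] [s, t, t] (by simp)
    simp only [symSum, List.cons_append, List.nil_append] at e0 e1 e2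
    linear_combination (norm := ring1) 1 / 2 * e0 - 1 / 2 * e1 + 1 / 6 * e2
  have h_ssttss (s t : Bool) : φ [s, s, t, t, s, s] = 0 := by
    have e0 := r [] [s] [s] [t, t] [s, s] (by simp)
    have e1 := r [s, t, t] [s] [s] [s] [] (by simp)
    have e2 := r [t, t] [s] [s] [s] [s] (by simp)
    simp only [symSum, List.cons_append, List.nil_append] at e0 e1 e2
    linear_combination (norm := ring1) 1 / 2 * e0 - 1 / 6 * e1 - 1 / 6 * e2
  have h_stssts (s t : Bool) : φ [s, t, s, s, t, s] = 0 := by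
    have e0 := r [s, t] [s] [s] [s, t] [] (by simp)
    have e1 := r [] [s, s] [s, t] [s, t] [] (by simp)
    have e2 := r [] [s] [s] [s] [t, s, t] (by simp)
    simp only [symSum, List.cons_append, List.nil_append] at e0 e1 e2
    linear_combination (norm := ring1) 1 / 2 * e0 - 1 / 2 * e1 + 1 / 6 * e2
  have h_ststss (s t : Bool) : φ [s, t, s, t, s, s] = 0 := by
    have e0 := r [] [s, s] [s, t] [s, t] [] (by simp)
    have e1 := r [] [s] [s] [s] [t, s, t] (by simp)
    have e2 := r [s, t] [s] [s] [s] [t] (by simp)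
    simp only [symSum, List.cons_append, List.nil_append] at e0 e1 e2
    linear_combination (norm := ring1) 1 / 2 * e0 - 1 / 6 * e1 - 1 / 6 * e2
  have h_tsstss (s t : Bool) : φ [t, s, s, t, s, s] = 0 := by
    have e0 := r [] [s, s] [t] [t] [s, s] (by simp)
    have e1 := r [] [s, s] [s, s] [t, t] [] (by simp)
    have e2 := r [] [s] [s] [s] [s, t, t] (by simp)
    simp only [symSum, List.cons_append, List.nil_append] at e0 e1 e2
    linear_combination (norm := ring1) 1 / 2 * e0 - 1 / 2 * e1 + 1 / 6 * e2
  have h_sststt (s t : Bool) : φ [s, s, t, s, t, t] = 0 := by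
    have e0 := r [] [s, t, s] [t] [t] [s] (by simp)
    have e1 := r [] [t] [t, s] [t, s] [s] (by simp)
    have e2 := r [] [s] [s] [t, s, t, t] [] (by simp)
    have e3 := r [s, t, s] [s] [t] [t] [] (by simp)
    have e4 := r [] [s] [s, t] [s, t] [t] (by simp)
    simp only [symSum, List.cons_append, List.nil_append] at e0 e1 e2 e3 e4
    linear_combination (norm := ring1) 1 / 6 * e0 - 1 / 6 * e1 + 1 / 6 * e2 - 1 / 3 * e3 + 1 / 3 * e4
  have h_ssttst (s t : Bool) : φ [s, s, t, t, s, t] = 0 := by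
    have e0 := r [] [s, t] [t, s] [t, s] [] (by simp)
    have e1 := r [] [s] [t] [t] [s, t, s] (by simp)
    have e2 := r [] [s] [s] [t, s, t] [t] (by simp)
    have e3 := r [s] [s, t] [s, t] [t] [] (by simp)
    have e4 := r [t] [s] [s] [t] [t, s] (by simp)
    have e5 := r [s] [s, t, s] [t] [t] [] (by simp)
    simp only [symSum, List.cons_append, List.nil_append] at e0 e1 e2 e3 e4 e5
    linear_combination (norm := ring1) 1 / 6 * e0 + 1 / 6 * e1 - 1 / 6 * e2 + 1 / 2 * e3 - 1 / 6 * e4 - 1 / 3 * e5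
  have h_stsstt (s t : Bool) : φ [s, t, s, s, t, t] = 0 := by
    have e0 := r [] [s] [s, t] [s, t] [t] (by simp)
    have e1 := r [] [s] [s] [t, s, t] [t] (by simp)
    have e2 := r [t, s, t] [s] [s] [t] [] (by simp)
    have e3 := r [] [t] [t, s] [t, s] [s] (by simp)
    have e4 := r [] [s, t, s, s] [t] [t] [] (by simp)
    simp only [symSum, List.cons_append, List.nil_append] at e0 e1 e2 e3 e4
    linear_combination (norm := ring1) 1 / 3 * e0 - 1 / 3 * e1 + 1 / 6 * e2 - 1 / 6 * e3 + 1 / 6 * e4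
  have h_ststst (s t : Bool) : φ [s, t, s, t, s, t] = 0 := by
    have e0 := r [] [s, t] [s, t] [s, t] [] (by simp)
    simp only [symSum, List.cons_append, List.nil_append] at e0
    linear_combination (norm := ring1) 1 / 6 * e0
  have h_ststts (s t : Bool) : φ [s, t, s, t, t, s] = 0 := by
    have e0 := r [] [s, t, s] [t] [t] [s] (by simp)
    have e1 := r [] [s, s] [t] [t] [s, t] (by simp)
    have e2 := r [] [s, t] [s, t] [t, s] [] (by simp)
    have e3 := r [] [s] [s] [t, t] [s, t] (by simp)
    have e4 := r [t] [s] [s] [t, s, t] [] (by simp)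
    simp only [symSum, List.cons_append, List.nil_append] at e0 e1 e2 e3 e4
    linear_combination (norm := ring1) 1 / 3 * e0 + 1 / 6 * e1 + 1 / 6 * e2 - 1 / 6 * e3 - 1 / 3 * e4
  have h_sttsst (s t : Bool) : φ [s, t, t, s, s, t] = 0 := by
    have e0 := r [s, t, t] [s] [s] [t] [] (by simp)
    have e1 := r [] [s, t] [s, t] [t, s] [] (by simp)
    have e2 := r [s] [s] [t] [t] [s, t] (by simp)
    have e3 := r [] [s] [s] [t] [t, s, t] (by simp)
    have e4 := r [s] [t] [t] [t, s] [s] (by simp)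
    simp only [symSum, List.cons_append, List.nil_append] at e0 e1 e2 e3 e4
    linear_combination (norm := ring1) 1 / 6 * e0 + 1 / 6 * e1 + 1 / 6 * e2 - 1 / 6 * e3 - 1 / 6 * e4
  have h_sttsts (s t : Bool) : φ [s, t, t, s, t, s] = 0 := by
    have e0 := r [] [s, t] [t, s] [t, s] [] (by simp)
    have e1 := r [t, s] [s, s] [t] [t] [] (by simp)
    have e2 := r [t] [s] [s] [s, t, t] [] (by simp)
    have e3 := r [s] [s, t, s] [t] [t] [] (by simp)
    have e4 := r [] [s] [s] [t, s, t] [t] (by simp)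
    simp only [symSum, List.cons_append, List.nil_append] at e0 e1 e2 e3 e4
    linear_combination (norm := ring1) 1 / 6 * e0 + 1 / 6 * e1 - 1 / 6 * e2 + 1 / 3 * e3 - 1 / 3 * e4
  match w, hw with
  | [a, b, c, d, e, f], _ =>
    have c0 := fun s => cube [] s [d, e, f] rfl
    have c1 := fun s => cube [a] s [e, f] rfl
    have c2 := fun s => cube [a, b] s [f] rfl
    have c3 := fun s => cube [a, b, c] s [] rfl
    simp only [List.cons_append, List.nil_append] at c0 c1 c2 c3
    cases a <;> cases b <;> cases c <;> cases d <;> cases e <;> cases f <;>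
    first
    | exact c0 _ | exact c1 _ | exact c2 _ | exact c3 _
    | exact h_sstsst true false | exact h_sstsst false true
    | exact h_sststs true false | exact h_sststs false true
    | exact h_ssttss true false | exact h_ssttss false true
    | exact h_stssts true false | exact h_stssts false true
    | exact h_ststss true false | exact h_ststss false true
    | exact h_tsstss true false | exact h_tsstss false true
    | exact h_sststt true false | exact h_sststt false true
    | exact h_ssttst true false | exact h_ssttst false true
    | exact h_stsstt true false | exact h_stsstt false true
    | exact h_ststst true false | exact h_ststst false true
    | exact h_ststts true false | exact h_ststts false true
    | exact h_sttsst true false | exact h_sttsst false true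
    | exact h_sttsts true false | exact h_sttsts false true

/-! ### Cyclic words of length four, five and six -/

/-- A cyclic function on words of length four satisfying the trace form of the polarised
Cayley–Hamilton identity vanishes as soon as it agrees on `x²y²` and `xyxy`. -/
theorem cyclic_four_eq_zero {k : Type*} [Field k] [CharZero k] (τ : List Bool → k)
    (hrot : ∀ u v : List Bool, τ (u ++ v) = τ (v ++ u))
    (hτ : ∀ u a b c : List Bool, (u ++ (a ++ (b ++ c))).length = 4 → u ≠ [] → a ≠ [] → b ≠ [] →
      c ≠ [] → symSum τ u a b c [] = 0)
    (hv : τ [true, true, false, false] = τ [true, false, true, false])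
    (w : List Bool) (hw : w.length = 4) : τ w = 0 := by
  have h1 (s t : Bool) : τ [s, s, s, t] = 0 := by
    have e := hτ [t] [s] [s] [s] rfl (by simp) (by simp) (by simp) (by simp)
    have r1 := hrot [t] [s, s, s]
    simp only [symSum, List.cons_append, List.nil_append] at e r1
    linear_combination (1 / 6 : k) * e - r1
  have h2 (s t : Bool) : 2 * τ [s, s, t, t] + τ [s, t, s, t] = 0 := by
    have e := hτ [t] [s] [s] [t] rfl (by simp) (by simp) (by simp) (by simp)
    have r1 := hrot [t] [s, s, t]
    have r2 := hrot [t] [s, t, s]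
    have r3 := hrot [t, t] [s, s]
    simp only [symSum, List.cons_append, List.nil_append] at e r1 r2 r3
    linear_combination (1 / 2 : k) * e - r1 - r2 - r3
  have h3 : τ [true, true, false, false] = 0 := by
    linear_combination (1 / 3 : k) * h2 true false + (1 / 3 : k) * hv
  have h4 : τ [true, false, true, false] = 0 := hv ▸ h3
  match w, hw with
  | [a, b, c, d], _ =>
    have r1 := hrot [a] [b, c, d]
    have r2 := hrot [a, b] [c, d]
    have r3 := hrot [a, b, c] [d]
    simp only [List.cons_append, List.nil_append] at r1 r2 r3
    cases a <;> cases b <;> cases c <;> cases d <;>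
    first
    | exact h1 _ _ | exact h3 | exact h4
    | exact r1.trans (h1 _ _) | exact r2.trans (h1 _ _) | exact r3.trans (h1 _ _)
    | exact r1.trans h3 | exact r2.trans h3 | exact r3.trans h3
    | exact r1.trans h4

/-- A cyclic function on words of length five satisfying the trace form of the polarised
Cayley–Hamilton identity vanishes. -/
theorem cyclic_five_eq_zero {k : Type*} [Field k] [CharZero k] (τ : List Bool → k)
    (hrot : ∀ u v : List Bool, τ (u ++ v) = τ (v ++ u))
    (hτ : ∀ u a b c : List Bool, (u ++ (a ++ (b ++ c))).length = 5 → u ≠ [] → a ≠ [] → b ≠ [] →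
      c ≠ [] → symSum τ u a b c [] = 0)
    (w : List Bool) (hw : w.length = 5) : τ w = 0 := by
  have h1 (s a b : Bool) : τ [s, s, s, a, b] = 0 := by
    have e := hτ [a, b] [s] [s] [s] rfl (by simp) (by simp) (by simp) (by simp)
    have r1 := hrot [a, b] [s, s, s]
    simp only [symSum, List.cons_append, List.nil_append] at e r1
    linear_combination (1 / 6 : k) * e - r1
  have h2 (s t : Bool) : τ [s, s, t, s, t] = 0 := by
    have e := hτ [s, t] [s] [s] [t] rfl (by simp) (by simp) (by simp) (by simp)
    have r1 := hrot [s, t] [s, s, t]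
    have r2 := hrot [s] [s, t, s, t]
    have r3 := hrot [s, t, t] [s, s]
    simp only [symSum, List.cons_append, List.nil_append] at e r1 r2 r3
    linear_combination (1 / 4 : k) * e - (1 / 2 : k) * r1 + (1 / 2 : k) * r2
      - (1 / 2 : k) * r3 - (1 / 2 : k) * h1 s t t
  match w, hw with
  | [a, b, c, d, e], _ =>
    have r1 := hrot [a] [b, c, d, e]
    have r2 := hrot [a, b] [c, d, e]
    have r3 := hrot [a, b, c] [d, e]
    have r4 := hrot [a, b, c, d] [e]
    simp only [List.cons_append, List.nil_append] at r1 r2 r3 r4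
    cases a <;> cases b <;> cases c <;> cases d <;> cases e <;>
    first
    | exact h1 _ _ _ | exact h2 _ _
    | exact r1.trans (h1 _ _ _) | exact r2.trans (h1 _ _ _) | exact r3.trans (h1 _ _ _)
    | exact r4.trans (h1 _ _ _)
    | exact r1.trans (h2 _ _) | exact r2.trans (h2 _ _) | exact r3.trans (h2 _ _)
    | exact r4.trans (h2 _ _)

/-- A cyclic function on words of length six satisfying the trace form of the polarised
Cayley–Hamilton identity vanishes as soon as it agrees on `x²y²xy` and `y²x²yx`. -/
theorem cyclic_six_eq_zero {k : Type*} [Field k] [CharZero k] (τ : List Bool → k)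
    (hrot : ∀ u v : List Bool, τ (u ++ v) = τ (v ++ u))
    (hτ : ∀ u a b c : List Bool, (u ++ (a ++ (b ++ c))).length = 6 → u ≠ [] → a ≠ [] → b ≠ [] →
      c ≠ [] → symSum τ u a b c [] = 0)
    (hw' : τ [true, true, false, false, true, false] = τ [false, false, true, true, false, true])
    (w : List Bool) (hw : w.length = 6) : τ w = 0 := by
  have h1 (s a b c : Bool) : τ [s, s, s, a, b, c] = 0 := by
    have e := hτ [a, b, c] [s] [s] [s] rfl (by simp) (by simp) (by simp) (by simp)
    have r1 := hrot [a, b, c] [s, s, s]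
    simp only [symSum, List.cons_append, List.nil_append] at e r1
    linear_combination (1 / 6 : k) * e - r1
  have h2 (s t : Bool) : τ [s, s, t, s, s, t] = 0 := by
    have e := hτ [s, s, t] [s] [s] [t] rfl (by simp) (by simp) (by simp) (by simp)
    have r1 := hrot [s, s, t, s, t] [s]
    have r2 := hrot [s, s, t, t] [s, s]
    simp only [symSum, List.cons_append, List.nil_append] at e r1 r2
    linear_combination (1 / 2 : k) * e - r1 - r2 - h1 s t s t - h1 s s t t
  have h3 : τ [true, true, false, false, true, false] = 0 := by
    have e := hτ [true, true, false] [true] [false] [false] rfl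
      (by simp) (by simp) (by simp) (by simp)
    have r1 := hrot [true, true, false, true] [false, false]
    have r2 := hrot [true, true, false, false, false] [true]
    have r3 := hrot [true, true] [true, false, false, false]
    have r4 := h1 true false false false
    simp only [symSum, List.cons_append, List.nil_append] at *
    grind
  have h4 : τ [false, false, true, true, false, true] = 0 := hw' ▸ h3
  have h5 (s t : Bool) (h : τ [s, s, t, t, s, t] = 0) (h' : τ [t, t, s, s, t, s] = 0) :
      τ [s, t, s, t, s, t] = 0 := by
    have e := hτ [s, t] [s, t] [s] [t] rfl (by simp) (by simp) (by simp) (by simp)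
    have r1 := hrot [s, t] [s, s, t, t]
    have r2 := hrot [s, t, s] [t, t, s]
    have r3 := hrot [s, t] [t, s, s, t]
    have r4 := hrot [s] [t, t, s, t, s]
    have r5 := hrot [s, t] [s, t, t, s]
    have r6 := hrot [s] [t, t, s, s, t]
    have r7 := hrot [s, t, s, s] [t, t]
    have r8 := hrot [s, t, t, s] [s, t]
    simp only [symSum, List.cons_append, List.nil_append] at *
    grind
  have h6 := h5 true false h3 h4
  match w, hw with
  | [a, b, c, d, e, f], _ =>
    have r1 := hrot [a] [b, c, d, e, f]
    have r2 := hrot [a, b] [c, d, e, f]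
    have r3 := hrot [a, b, c] [d, e, f]
    have r4 := hrot [a, b, c, d] [e, f]
    have r5 := hrot [a, b, c, d, e] [f]
    simp only [List.cons_append, List.nil_append] at r1 r2 r3 r4 r5
    cases a <;> cases b <;> cases c <;> cases d <;> cases e <;> cases f <;>
    first
    | exact h1 _ _ _ _ | exact h2 _ _ | exact h3 | exact h4 | exact h6
    | exact r1.trans (h1 _ _ _ _) | exact r2.trans (h1 _ _ _ _) | exact r3.trans (h1 _ _ _ _)
    | exact r4.trans (h1 _ _ _ _) | exact r5.trans (h1 _ _ _ _)
    | exact r1.trans (h2 _ _) | exact r2.trans (h2 _ _)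
    | exact r1.trans h3 | exact r2.trans h3 | exact r3.trans h3 | exact r4.trans h3
    | exact r5.trans h3
    | exact r1.trans h4 | exact r2.trans h4 | exact r3.trans h4 | exact r4.trans h4
    | exact r5.trans h4
    | exact r1.trans h6

/-! ### Words in two traceless matrices -/

set_option maxHeartbeats 2000000 in
/-- The complete polarisation of the Cayley–Hamilton theorem for `3 × 3` matrices. -/
theorem polarized_cayley_hamilton {k : Type*} [Field k] (a b c : Matrix (Fin 3) (Fin 3) k) :
    a * (b * c) + a * (c * b) + b * (a * c) + b * (c * a) + c * (a * b) + c * (b * a) =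
      a.trace • (b * c + c * b) + b.trace • (a * c + c * a) + c.trace • (a * b + b * a)
      - (a.trace * b.trace - (a * b).trace) • c - (a.trace * c.trace - (a * c).trace) • b
      - (b.trace * c.trace - (b * c).trace) • a
      + (a.trace * b.trace * c.trace - a.trace * (b * c).trace - b.trace * (a * c).trace
        - c.trace * (a * b).trace + (a * (b * c)).trace + (a * (c * b)).trace) • 1 := by
  ext i j
  fin_cases i <;> fin_cases j <;>
    simp [Matrix.mul_apply, Matrix.trace, Fin.sum_univ_three] <;> ring

section Words

variable {k ι : Type*} [Field k]

/-- The value of a word in the two families of matrices `X true` and `X false`. -/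
def wordVal (X : Bool → ι → Matrix (Fin 3) (Fin 3) k) (w : List Bool) (i : ι) :
    Matrix (Fin 3) (Fin 3) k :=
  (w.map fun c => X c i).prod

/-- The trace of a word in the two families of matrices `X true` and `X false`. -/
def wordTr (X : Bool → ι → Matrix (Fin 3) (Fin 3) k) (w : List Bool) : ι → k :=
  fun i => (wordVal X w i).trace

theorem wordVal_append (X : Bool → ι → Matrix (Fin 3) (Fin 3) k) (u v : List Bool) (i : ι) :
    wordVal X (u ++ v) i = wordVal X u i * wordVal X v i := by
  simp [wordVal]

theorem wordTr_append_comm (X : Bool → ι → Matrix (Fin 3) (Fin 3) k) (u v : List Bool) :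
    wordTr X (u ++ v) = wordTr X (v ++ u) := by
  funext i
  simp only [wordTr, wordVal_append]
  exact Matrix.trace_mul_comm _ _

/-- A linear functional witnesses that a vector lies outside a subspace; so membership in a
subspace may be checked as an equation between scalars. -/
theorem mem_of_forall_functional {V : Type*} [AddCommGroup V] [Module k V] (p : Submodule k V)
    (v : V) (h : ∀ l : V →ₗ[k] k, (∀ x ∈ p, l x = 0) → l v = 0) : v ∈ p := by
  by_contra hv
  obtain ⟨l, hl, hp⟩ := Submodule.exists_le_ker_of_notMem hv
  exact hl (h l fun x hx => hp hx)

/-- If the traces of all words of length less than `N` lie in `A`, then so does the trace of `u` times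
the polarised Cayley–Hamilton sum of `a`, `b`, `c` in total length `N`; stated through a functional
`l` that vanishes on `A`. -/
theorem symSum_wordTr_eq_zero (X : Bool → ι → Matrix (Fin 3) (Fin 3) k) (A : Subalgebra k (ι → k))
    (N : ℕ) (hA : ∀ w : List Bool, w.length < N → wordTr X w ∈ A) (l : (ι → k) →ₗ[k] k)
    (hl : ∀ x ∈ A, l x = 0) (u a b c : List Bool) (hN : (u ++ (a ++ (b ++ c))).length = N)
    (hu : u ≠ []) (ha : a ≠ []) (hb : b ≠ []) (hc : c ≠ []) :
    symSum (fun w => l (wordTr X w)) u a b c [] = 0 := by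
  simp only [← List.length_pos_iff_ne_nil, List.length_append] at *
  have t : ∀ w : List Bool, w.length < N → wordTr X w ∈ A := hA
  have key : wordTr X (u ++ (a ++ (b ++ c))) + wordTr X (u ++ (a ++ (c ++ b))) +
      wordTr X (u ++ (b ++ (a ++ c))) + wordTr X (u ++ (b ++ (c ++ a))) +
      wordTr X (u ++ (c ++ (a ++ b))) + wordTr X (u ++ (c ++ (b ++ a))) =
      wordTr X a * (wordTr X (u ++ (b ++ c)) + wordTr X (u ++ (c ++ b))) +
      wordTr X b * (wordTr X (u ++ (a ++ c)) + wordTr X (u ++ (c ++ a))) +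
      wordTr X c * (wordTr X (u ++ (a ++ b)) + wordTr X (u ++ (b ++ a))) -
      (wordTr X a * wordTr X b - wordTr X (a ++ b)) * wordTr X (u ++ c) -
      (wordTr X a * wordTr X c - wordTr X (a ++ c)) * wordTr X (u ++ b) -
      (wordTr X b * wordTr X c - wordTr X (b ++ c)) * wordTr X (u ++ a) +
      (wordTr X a * wordTr X b * wordTr X c - wordTr X a * wordTr X (b ++ c) -
        wordTr X b * wordTr X (a ++ c) - wordTr X c * wordTr X (a ++ b) +
        wordTr X (a ++ (b ++ c)) + wordTr X (a ++ (c ++ b))) * wordTr X u := by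
    funext i
    have h := congrArg (fun m => (wordVal X u i * m).trace) (polarized_cayley_hamilton
      (wordVal X a i) (wordVal X b i) (wordVal X c i))
    simp only [Matrix.mul_add, Matrix.mul_sub, Matrix.mul_smul, Matrix.trace_add,
      Matrix.trace_sub, Matrix.trace_smul, smul_eq_mul, Matrix.mul_one] at h
    simp only [wordTr, wordVal_append, Pi.add_apply, Pi.sub_apply, Pi.mul_apply]
    linear_combination h
  have hm : wordTr X (u ++ (a ++ (b ++ c))) + wordTr X (u ++ (a ++ (c ++ b))) +
      wordTr X (u ++ (b ++ (a ++ c))) + wordTr X (u ++ (b ++ (c ++ a))) +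
      wordTr X (u ++ (c ++ (a ++ b))) + wordTr X (u ++ (c ++ (b ++ a))) ∈ A := by
    rw [key]
    refine (A.add_mem (A.sub_mem (A.sub_mem (A.sub_mem (A.add_mem (A.add_mem
      (A.mul_mem (t _ ?_) (A.add_mem (t _ ?_) (t _ ?_)))
      (A.mul_mem (t _ ?_) (A.add_mem (t _ ?_) (t _ ?_))))
      (A.mul_mem (t _ ?_) (A.add_mem (t _ ?_) (t _ ?_))))
      (A.mul_mem (A.sub_mem (A.mul_mem (t _ ?_) (t _ ?_)) (t _ ?_)) (t _ ?_)))
      (A.mul_mem (A.sub_mem (A.mul_mem (t _ ?_) (t _ ?_)) (t _ ?_)) (t _ ?_)))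
      (A.mul_mem (A.sub_mem (A.mul_mem (t _ ?_) (t _ ?_)) (t _ ?_)) (t _ ?_)))
      (A.mul_mem (A.add_mem (A.add_mem (A.sub_mem (A.sub_mem (A.sub_mem
        (A.mul_mem (A.mul_mem (t _ ?_) (t _ ?_)) (t _ ?_)) (A.mul_mem (t _ ?_) (t _ ?_)))
        (A.mul_mem (t _ ?_) (t _ ?_))) (A.mul_mem (t _ ?_) (t _ ?_))) (t _ ?_)) (t _ ?_))
        (t _ ?_)))
    all_goals
      (try simp only [List.length_append])
      omega
  have := hl _ hm
  simp only [map_add] at this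
  simpa [symSum] using this

/-- The traces of words of length at most six lie in any algebra containing the nine generators. -/
theorem wordTr_mem_of_length_le_six [CharZero k] (X : Bool → ι → Matrix (Fin 3) (Fin 3) k)
    (hX : ∀ c i, (X c i).trace = 0) (A : Subalgebra k (ι → k))
    (h2 : ∀ w : List Bool, w.length = 2 → wordTr X w ∈ A)
    (h3 : ∀ w : List Bool, w.length = 3 → wordTr X w ∈ A)
    (hv : wordTr X [true, true, false, false] - wordTr X [true, false, true, false] ∈ A)
    (hw : wordTr X [true, true, false, false, true, false] -
      wordTr X [false, false, true, true, false, true] ∈ A)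
    (w : List Bool) (hlen : w.length ≤ 6) : wordTr X w ∈ A := by
  have h0 : ∀ w : List Bool, w.length = 0 → wordTr X w ∈ A := by
    intro w h
    obtain rfl := List.length_eq_zero_iff.1 h
    have : wordTr X [] = algebraMap k (ι → k) 3 := by
      funext i
      simp [wordTr, wordVal]
    rw [this]
    exact A.algebraMap_mem 3
  have h1 : ∀ w : List Bool, w.length = 1 → wordTr X w ∈ A := by
    intro w h
    obtain ⟨c, rfl⟩ := List.length_eq_one_iff.1 h
    have : wordTr X [c] = 0 := by
      funext i
      simp [wordTr, wordVal, hX]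
    rw [this]
    exact A.zero_mem
  have step {N : ℕ} (hN : ∀ w : List Bool, w.length < N → wordTr X w ∈ A)
      (hrel : ∀ τ : List Bool → k, (∀ u v, τ (u ++ v) = τ (v ++ u)) →
        (∀ u a b c : List Bool, (u ++ (a ++ (b ++ c))).length = N → u ≠ [] → a ≠ [] → b ≠ [] →
          c ≠ [] → symSum τ u a b c [] = 0) →
        τ [true, true, false, false] = τ [true, false, true, false] →
        τ [true, true, false, false, true, false] = τ [false, false, true, true, false, true] →
        ∀ w : List Bool, w.length = N → τ w = 0) :
      ∀ w : List Bool, w.length = N → wordTr X w ∈ A := by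
    intro w hw'
    refine mem_of_forall_functional A.toSubmodule _ fun l hl => ?_
    refine hrel (fun w => l (wordTr X w)) (fun u v => by rw [wordTr_append_comm])
      (symSum_wordTr_eq_zero X A N hN l hl) ?_ ?_ w hw'
    · exact sub_eq_zero.1 (by rw [← map_sub]; exact hl _ hv)
    · exact sub_eq_zero.1 (by rw [← map_sub]; exact hl _ hw)
  have le3 : ∀ w : List Bool, w.length < 4 → wordTr X w ∈ A := by
    intro w h
    rcases (by omega : w.length = 0 ∨ w.length = 1 ∨ w.length = 2 ∨ w.length = 3)
      with h | h | h | h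
    exacts [h0 w h, h1 w h, h2 w h, h3 w h]
  have h4 := step le3 fun τ a b c _ => cyclic_four_eq_zero τ a b c
  have le4 : ∀ w : List Bool, w.length < 5 → wordTr X w ∈ A := fun w h =>
    (Nat.lt_succ_iff_lt_or_eq.1 h).elim (le3 w) (h4 w)
  have h5 := step le4 fun τ a b _ _ => cyclic_five_eq_zero τ a b
  have le5 : ∀ w : List Bool, w.length < 6 → wordTr X w ∈ A := fun w h =>
    (Nat.lt_succ_iff_lt_or_eq.1 h).elim (le4 w) (h5 w)
  have h6 := step le5 fun τ a b _ d => cyclic_six_eq_zero τ a b d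
  exact (Nat.le_iff_lt_or_eq.1 hlen).elim (le5 w) (h6 w)

/-- The `A`-linear combinations of words of length at most five. -/
def shortSpan (X : Bool → ι → Matrix (Fin 3) (Fin 3) k) (A : Subalgebra k (ι → k)) :
    Submodule k (ι → Matrix (Fin 3) (Fin 3) k) :=
  Submodule.span k {m | ∃ a ∈ A, ∃ w : List Bool, w.length ≤ 5 ∧ m = fun i => a i • wordVal X w i}

theorem smul_mem_shortSpan (X : Bool → ι → Matrix (Fin 3) (Fin 3) k) (A : Subalgebra k (ι → k))
    {a : ι → k} (ha : a ∈ A) {m : ι → Matrix (Fin 3) (Fin 3) k} (hm : m ∈ shortSpan X A) :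
    (fun i => a i • m i) ∈ shortSpan X A := by
  induction hm using Submodule.span_induction with
  | mem m hm =>
    obtain ⟨b, hb, w, hw, rfl⟩ := hm
    exact Submodule.subset_span ⟨a * b, A.mul_mem ha hb, w, hw, by
      funext i; simp [mul_smul]⟩
  | zero =>
    convert (shortSpan X A).zero_mem using 1
    funext i
    simp
  | add m m' _ _ h h' => simpa using! (shortSpan X A).add_mem h h'
  | smul t m _ h =>
    convert (shortSpan X A).smul_mem t h using 1
    funext i
    simp [smul_smul, mul_comm]

theorem wordVal_mem_shortSpan_of_le (X : Bool → ι → Matrix (Fin 3) (Fin 3) k)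
    (A : Subalgebra k (ι → k)) (w : List Bool) (hw : w.length ≤ 5) :
    wordVal X w ∈ shortSpan X A :=
  Submodule.subset_span ⟨1, A.one_mem, w, hw, by funext i; simp⟩

/-- Words of length six are `A`-linear combinations of shorter ones. -/
theorem wordVal_six_mem [CharZero k] (X : Bool → ι → Matrix (Fin 3) (Fin 3) k) (A : Subalgebra k (ι → k))
    (hA : ∀ w : List Bool, w.length ≤ 6 → wordTr X w ∈ A) (w : List Bool) (hw : w.length = 6) :
    wordVal X w ∈ shortSpan X A := by
  refine mem_of_forall_functional _ _ fun l hl => ?_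
  refine word_six_eq_zero (fun w => l (wordVal X w)) ?_ w hw
  intro u a b c v hN ha hb hc
  simp only [← List.length_pos_iff_ne_nil, List.length_append] at *
  have t := hA
  have s : ∀ (f : ι → k) (w : List Bool), f ∈ A → w.length ≤ 5 →
      l (fun i => f i • wordVal X w i) = 0 := fun f w hf hw =>
    hl _ (smul_mem_shortSpan X A hf (wordVal_mem_shortSpan_of_le X A w hw))
  have key : wordVal X (u ++ (a ++ (b ++ (c ++ v)))) + wordVal X (u ++ (a ++ (c ++ (b ++ v)))) +
      wordVal X (u ++ (b ++ (a ++ (c ++ v)))) + wordVal X (u ++ (b ++ (c ++ (a ++ v)))) +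
      wordVal X (u ++ (c ++ (a ++ (b ++ v)))) + wordVal X (u ++ (c ++ (b ++ (a ++ v)))) =
      (fun i => wordTr X a i • wordVal X (u ++ (b ++ (c ++ v))) i) +
      (fun i => wordTr X a i • wordVal X (u ++ (c ++ (b ++ v))) i) +
      (fun i => wordTr X b i • wordVal X (u ++ (a ++ (c ++ v))) i) +
      (fun i => wordTr X b i • wordVal X (u ++ (c ++ (a ++ v))) i) +
      (fun i => wordTr X c i • wordVal X (u ++ (a ++ (b ++ v))) i) +
      (fun i => wordTr X c i • wordVal X (u ++ (b ++ (a ++ v))) i) -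
      (fun i => (wordTr X a * wordTr X b - wordTr X (a ++ b)) i • wordVal X (u ++ (c ++ v)) i) -
      (fun i => (wordTr X a * wordTr X c - wordTr X (a ++ c)) i • wordVal X (u ++ (b ++ v)) i) -
      (fun i => (wordTr X b * wordTr X c - wordTr X (b ++ c)) i • wordVal X (u ++ (a ++ v)) i) +
      (fun i => (wordTr X a * wordTr X b * wordTr X c - wordTr X a * wordTr X (b ++ c) -
        wordTr X b * wordTr X (a ++ c) - wordTr X c * wordTr X (a ++ b) +
        wordTr X (a ++ (b ++ c)) + wordTr X (a ++ (c ++ b))) i • wordVal X (u ++ v) i) := by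
    funext i
    have h := congrArg (fun m => wordVal X u i * (m * wordVal X v i)) (polarized_cayley_hamilton
      (wordVal X a i) (wordVal X b i) (wordVal X c i))
    simp only [Matrix.mul_add, Matrix.mul_sub, Matrix.mul_smul, Matrix.add_mul, Matrix.sub_mul,
      Matrix.smul_mul, Matrix.one_mul, Matrix.mul_assoc, smul_add] at h
    simp only [wordTr, wordVal_append, Pi.add_apply, Pi.sub_apply, Pi.mul_apply]
    rw [h]
    abel
  have hz := congrArg l key
  simp only [map_add, map_sub] at hz
  rw [s _ _ (t _ ?_) ?_, s _ _ (t _ ?_) ?_, s _ _ (t _ ?_) ?_, s _ _ (t _ ?_) ?_,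
    s _ _ (t _ ?_) ?_, s _ _ (t _ ?_) ?_,
    s _ _ (A.sub_mem (A.mul_mem (t _ ?_) (t _ ?_)) (t _ ?_)) ?_,
    s _ _ (A.sub_mem (A.mul_mem (t _ ?_) (t _ ?_)) (t _ ?_)) ?_,
    s _ _ (A.sub_mem (A.mul_mem (t _ ?_) (t _ ?_)) (t _ ?_)) ?_,
    s _ _ (A.add_mem (A.add_mem (A.sub_mem (A.sub_mem (A.sub_mem
      (A.mul_mem (A.mul_mem (t _ ?_) (t _ ?_)) (t _ ?_)) (A.mul_mem (t _ ?_) (t _ ?_)))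
      (A.mul_mem (t _ ?_) (t _ ?_))) (A.mul_mem (t _ ?_) (t _ ?_))) (t _ ?_)) (t _ ?_)) ?_] at hz
  · simpa [symSum] using hz
  all_goals (try simp only [List.length_append]); omega

/-- The traces of all words in two traceless matrices lie in any algebra containing the nine
generators, since every word is an `A`-linear combination of words of length at most five. -/
theorem wordTr_mem [CharZero k] (X : Bool → ι → Matrix (Fin 3) (Fin 3) k)
    (hX : ∀ c i, (X c i).trace = 0) (A : Subalgebra k (ι → k))
    (h2 : ∀ w : List Bool, w.length = 2 → wordTr X w ∈ A)
    (h3 : ∀ w : List Bool, w.length = 3 → wordTr X w ∈ A)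
    (hv : wordTr X [true, true, false, false] - wordTr X [true, false, true, false] ∈ A)
    (hw : wordTr X [true, true, false, false, true, false] -
      wordTr X [false, false, true, true, false, true] ∈ A)
    (w : List Bool) : wordTr X w ∈ A := by
  have hA := wordTr_mem_of_length_le_six X hX A h2 h3 hv hw
  have hmul : ∀ (c : Bool) (m : ι → Matrix (Fin 3) (Fin 3) k), m ∈ shortSpan X A →
      (fun i => X c i * m i) ∈ shortSpan X A := by
    intro c m hm
    induction hm using Submodule.span_induction with
    | mem m hm =>
      obtain ⟨a, ha, w, hw, rfl⟩ := hm
      have : wordVal X (c :: w) ∈ shortSpan X A := by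
        rcases Nat.le_iff_lt_or_eq.1 hw with h | h
        · exact wordVal_mem_shortSpan_of_le X A _ (by simpa using h)
        · exact wordVal_six_mem X A hA _ (by simp [h])
      simpa [wordVal] using smul_mem_shortSpan X A ha this
    | zero =>
      convert (shortSpan X A).zero_mem using 1
      funext i
      simp
    | add m m' _ _ h h' => simpa [Matrix.mul_add] using! (shortSpan X A).add_mem h h'
    | smul t m _ h => simpa using! (shortSpan X A).smul_mem t h
  have hall : wordVal X w ∈ shortSpan X A := by
    induction w with
    | nil => exact wordVal_mem_shortSpan_of_le X A [] (by simp)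
    | cons c w ih => simpa [wordVal] using! hmul c _ ih
  suffices ∀ m ∈ shortSpan X A, (fun i => (m i).trace) ∈ A from this _ hall
  intro m hm
  induction hm using Submodule.span_induction with
  | mem m hm =>
    obtain ⟨a, ha, w, hw, rfl⟩ := hm
    simpa using! A.mul_mem ha (hA w (by omega))
  | zero =>
    convert A.zero_mem using 1
    funext i
    simp
  | add m m' _ _ h h' => simpa using! A.add_mem h h'
  | smul t m _ h => simpa using! A.smul_mem h t

end Words

/-! ### Permutations give products of traces -/

section PermTrace

variable {k n : Type*} [CommRing k] [Fintype n]

/-- The trace of the tensor `⨂ M t` composed with the permutation `σ` of the tensor factors. -/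
def permTrace {α : Type*} [Fintype α] [DecidableEq α] (σ : Equiv.Perm α)
    (M : α → Matrix n n k) : k :=
  ∑ I : α → n, ∏ t, M t (I t) (I (σ t))

theorem permTrace_equiv {α β : Type*} [Fintype α] [DecidableEq α] [Fintype β] [DecidableEq β]
    (e : α ≃ β) (σ : Equiv.Perm β) (M : β → Matrix n n k) :
    permTrace σ M = permTrace ((e.trans σ).trans e.symm) (M ∘ e) := by
  unfold permTrace
  refine Fintype.sum_equiv (Equiv.arrowCongr e.symm (Equiv.refl n)) _ _ fun I => ?_
  refine (Fintype.prod_equiv e _ _ fun t => ?_).symm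
  simp [Equiv.arrowCongr]

theorem permTrace_option {α : Type*} [Fintype α] [DecidableEq α]
    (σ : Equiv.Perm (Option α)) (M : Option α → Matrix n n k) :
    permTrace σ M = ∑ I : α → n, ∑ i : n, M none i ((σ none).elim i I) *
      ∏ t, M (some t) (I t) ((σ (some t)).elim i I) := by
  unfold permTrace
  rw [Finset.sum_comm, ← Fintype.sum_prod_type']
  refine Fintype.sum_equiv Equiv.piOptionEquivProd _ _ fun I => ?_
  rw [Fintype.prod_option]
  have h : ∀ o : Option α, o.elim (I none) (fun t => I (some t)) = I o := by
    intro o; cases o <;> rfl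
  simp [Equiv.piOptionEquivProd, h]

/-- A fixed point of the permutation splits off a trace. -/
theorem permTrace_option_fixed {α : Type*} [Fintype α] [DecidableEq α]
    (σ : Equiv.Perm (Option α)) (M : Option α → Matrix n n k) (h : σ none = none) :
    permTrace σ M =
      (M none).trace * permTrace (Equiv.removeNone σ) fun t => M (some t) := by
  have hs : ∀ t, σ (some t) = some (Equiv.removeNone σ t) := fun t =>
    (Equiv.removeNone_some σ (Option.ne_none_iff_exists'.1 fun h' =>
      Option.some_ne_none t (σ.injective (h'.trans h.symm)))).symm
  rw [permTrace_option, permTrace, Finset.mul_sum]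
  refine Finset.sum_congr rfl fun I _ => ?_
  simp [h, hs, Matrix.trace, Finset.sum_mul]

/-- A point `none` that is not fixed may be removed by multiplying its matrix into that of its
predecessor `b`. -/
theorem permTrace_option_moved {α : Type*} [Fintype α] [DecidableEq α]
    (σ : Equiv.Perm (Option α)) (M : Option α → Matrix n n k) (b : α) (h : σ (some b) = none) :
    permTrace σ M = permTrace (Equiv.removeNone σ)
      (Function.update (fun t => M (some t)) b (M (some b) * M none)) := by
  have hb : σ none = some (Equiv.removeNone σ b) := (Equiv.removeNone_none σ h).symm
  have hs : ∀ t, t ≠ b → σ (some t) = some (Equiv.removeNone σ t) := fun t ht =>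
    (Equiv.removeNone_some σ (Option.ne_none_iff_exists'.1 fun h' =>
      ht (Option.some_injective _ (σ.injective (h'.trans h.symm))))).symm
  rw [permTrace_option, permTrace]
  refine Finset.sum_congr rfl fun I _ => ?_
  rw [← Finset.mul_prod_erase _ _ (Finset.mem_univ b), Function.update_self, Matrix.mul_apply,
    Finset.sum_mul]
  refine Finset.sum_congr rfl fun i _ => ?_
  rw [← Finset.mul_prod_erase _ _ (Finset.mem_univ b), h, hb, Option.elim_none, Option.elim_some]
  have : ∏ t ∈ Finset.univ.erase b, M (some t) (I t) ((σ (some t)).elim i I) =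
      ∏ t ∈ Finset.univ.erase b, Function.update (fun t => M (some t)) b
        (M (some b) * M none) t (I t) (I (Equiv.removeNone σ t)) := by
    refine Finset.prod_congr rfl fun t ht => ?_
    have ht := Finset.ne_of_mem_erase ht
    rw [hs t ht, Function.update_of_ne ht, Option.elim_some]
  rw [this]
  ring

/-- If a set of matrix-valued functions is closed under products and its traces lie in `A`, then
so do all the functions `permTrace`. -/
theorem permTrace_mem {ι : Type*} (A : Subalgebra k (ι → k)) (S : Set (ι → Matrix n n k))
    (hmul : ∀ m ∈ S, ∀ m' ∈ S, m * m' ∈ S) (htr : ∀ m ∈ S, (fun i => (m i).trace) ∈ A)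
    (α : Type) [Finite α] :
    ∀ [Fintype α] [DecidableEq α] (σ : Equiv.Perm α) (M : α → ι → Matrix n n k),
      (∀ t, M t ∈ S) → (fun i => permTrace σ fun t => M t i) ∈ A := by
  induction α using Finite.induction_empty_option with
  | of_equiv e ih =>
    classical
    intro _ _ σ M hM
    have := Fintype.ofEquiv _ e.symm
    simp only [permTrace_equiv e]
    exact ih _ (M ∘ e) fun t => hM _
  | h_empty =>
    intro _ _ σ M hM
    have : (fun i => permTrace σ fun t => M t i) = (1 : ι → k) := by
      funext i
      simp [permTrace]
    rw [this]
    exact A.one_mem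
  | @h_option α _ ih =>
    classical
    intro i₁ i₂ σ M hM
    obtain rfl : i₁ = instFintypeOption := Subsingleton.elim _ _
    obtain rfl : i₂ = Option.instDecidableEq := Subsingleton.elim _ _
    rcases h : σ.symm none with _ | b
    · have h : σ none = none := by rw [← h, Equiv.apply_symm_apply, h]
      simp only [permTrace_option_fixed σ _ h]
      exact A.mul_mem (htr _ (hM none)) (ih _ (fun t => M (some t)) fun t => hM _)
    · have h : σ (some b) = none := by rw [← h, Equiv.apply_symm_apply]
      have h' := ih (Equiv.removeNone σ)
        (Function.update (fun t => M (some t)) b (M (some b) * M none)) fun t => by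
          rcases eq_or_ne t b with rfl | ht
          · simpa using hmul _ (hM _) _ (hM _)
          · simpa [ht] using hM _
      convert h' using 2 with i
      rw [permTrace_option_moved σ _ b h]
      congr 1
      funext t
      rcases eq_or_ne t b with rfl | ht
      · simp
      · simp [ht]

end PermTrace

/-! ### The double centraliser of the symmetric group on tensor space -/

section DoubleCentralizer

variable {k n : Type*} [Field k] [CharZero k]

/-- The symmetric group acting on tensor space `(kⁿ)^{⊗d}`, realised as functions on `Fin d → n`,
by permuting the factors. -/
def tensorRep (k n : Type*) [Field k] (d : ℕ) :
    Representation k (Equiv.Perm (Fin d)) ((Fin d → n) → k) where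
  toFun σ := LinearMap.funLeft k k fun I => I ∘ σ
  map_one' := by ext; simp [LinearMap.funLeft]
  map_mul' σ τ := by ext; simp [LinearMap.funLeft, Function.comp_assoc]

/-- An operator on tensor space commuting with every operator that commutes with the symmetric
group is a linear combination of permutations. -/
theorem double_centralizer [Fintype n] [DecidableEq n] (d : ℕ)
    (T : Matrix (Fin d → n) (Fin d → n) k)
    (hT : ∀ B : Matrix (Fin d → n) (Fin d → n) k,
      (∀ (σ : Equiv.Perm (Fin d)) I J, B (I ∘ σ) (J ∘ σ) = B I J) → T * B = B * T) :
    ∃ a : Equiv.Perm (Fin d) → k, ∀ J I, T J I = ∑ σ, a σ * if J ∘ σ = I then 1 else 0 := by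
  classical
  let ρ := tensorRep k n d
  let f : Module.End (Module.End (MonoidAlgebra k (Equiv.Perm (Fin d))) ρ.asModule) ρ.asModule :=
    { toFun := fun v => ρ.asModuleEquiv.symm (T.mulVec (ρ.asModuleEquiv v))
      map_add' := by intro v w; simp [Matrix.mulVec_add]
      map_smul' := by
        intro φ v
        let ψ : ((Fin d → n) → k) →ₗ[k] ((Fin d → n) → k) :=
          ρ.asModuleEquiv.toLinearMap ∘ₗ (φ.restrictScalars k) ∘ₗ ρ.asModuleEquiv.symm.toLinearMap
        have hψ : ∀ σ v, ψ (ρ σ v) = ρ σ (ψ v) := by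
          intro σ v
          simp only [ψ, LinearMap.comp_apply, LinearEquiv.coe_coe,
            LinearMap.coe_restrictScalars]
          rw [Representation.asModuleEquiv_symm_map_rho, map_smul,
            Representation.asModuleEquiv_map_smul]
          simp
        have hc := hT (LinearMap.toMatrix' ψ) fun σ I J => by
          have := congrFun (hψ σ (Pi.single (J ∘ σ) 1)) I
          have h1 : ρ σ (Pi.single (J ∘ σ) 1) = Pi.single J 1 := by
            funext I
            simp [ρ, tensorRep, LinearMap.funLeft, Pi.single_apply, σ.surjective.injective_comp_right.eq_iff]
          rw [h1] at this
          simp [LinearMap.toMatrix'_apply, this, ρ, tensorRep, LinearMap.funLeft]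
        have hv := congrArg (fun B => B.mulVec (ρ.asModuleEquiv v)) hc
        simp only [← Matrix.mulVec_mulVec, LinearMap.toMatrix'_mulVec] at hv
        apply ρ.asModuleEquiv.injective
        simpa [ψ] using hv }
  obtain ⟨r, hr⟩ := jacobson_density f
    (Finset.univ.image fun I => ρ.asModuleEquiv.symm (Pi.single I 1))
  refine ⟨fun σ => r.coeff σ, fun J I => ?_⟩
  have h := hr _ (Finset.mem_image_of_mem _ (Finset.mem_univ I))
  have h := congrArg ρ.asModuleEquiv h
  rw [Representation.asModuleEquiv_map_smul] at h
  have h := congrFun h J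
  simp [f, Representation.asAlgebraHom_def] at h
  rw [h]
  rw [MonoidAlgebra.lift_apply, Finsupp.sum_fintype _ _ (by simp)]
  simp [ρ, tensorRep, LinearMap.funLeft, Pi.single_apply]

end DoubleCentralizer

/-! ### Polynomials as symmetric coefficient families -/

section SymmetricCoefficients

open MvPolynomial

variable {k X : Type*} [Field k] {d : ℕ}

/-- The exponent vector of the noncommutative monomial `s 0, …, s (d - 1)`. -/
noncomputable def exponent (s : Fin d → X) : X →₀ ℕ := ∑ t, Finsupp.single (s t) 1

theorem prod_X_eq_monomial (s : Fin d → X) :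
    ∏ t, (MvPolynomial.X (s t) : MvPolynomial X k) = monomial (exponent s) 1 := by
  simp only [exponent, monomial_sum_one, MvPolynomial.X]

theorem exponent_comp (s : Fin d → X) (σ : Equiv.Perm (Fin d)) :
    exponent (s ∘ σ) = exponent s :=
  Equiv.sum_comp σ fun t => Finsupp.single (s t) 1

theorem exists_perm_of_exponent_eq {s s' : Fin d → X} (h : exponent s = exponent s') :
    ∃ σ : Equiv.Perm (Fin d), s = s' ∘ σ := by
  classical
  have hc : ∀ (s : Fin d → X) x, exponent s x = Fintype.card {t // s t = x} := by
    intro s x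
    simp [exponent, Finsupp.finsetSum_apply, Finsupp.single_apply, Fintype.card_subtype]
  have e : ∀ x, {t // s t = x} ≃ {t // s' t = x} := fun x =>
    Fintype.equivOfCardEq (by rw [← hc, ← hc, h])
  exact ⟨Equiv.ofFiberEquiv e, funext fun t => (Equiv.ofFiberEquiv_map e t).symm⟩

theorem exists_exponent_eq (m : X →₀ ℕ) (hm : m.degree = d) : ∃ s : Fin d → X, exponent s = m := by
  classical
  induction d generalizing m with
  | zero =>
    obtain rfl := (Finsupp.degree_eq_zero_iff m).1 hm
    exact ⟨Fin.elim0, by simp [exponent]⟩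
  | succ d ih =>
    have hne : m ≠ 0 := by
      rintro rfl
      simp at hm
    obtain ⟨x, hx⟩ := Finsupp.ne_iff.1 hne
    have hle : Finsupp.single x 1 ≤ m := by
      simpa [Nat.one_le_iff_ne_zero] using hx
    have hsum := tsub_add_cancel_of_le hle
    obtain ⟨s, hs⟩ := ih (m - Finsupp.single x 1) (by
      have := congrArg Finsupp.degree hsum
      rw [map_add, Finsupp.degree_single, hm] at this
      omega)
    refine ⟨Fin.cons x s, ?_⟩
    rw [exponent, Fin.sum_univ_succ]
    simp only [Fin.cons_zero, Fin.cons_succ]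
    rw [← exponent, hs, add_comm, hsum]

/-- A linear relation between noncommutative monomials, read modulo commutativity, pairs to zero
with every symmetric family. -/
theorem sum_mul_eq_zero_of_symm [Fintype X] (φ β : (Fin d → X) → k)
    (hβ : ∀ (σ : Equiv.Perm (Fin d)) s, β (s ∘ σ) = β s)
    (h : ∑ s, C (φ s) * ∏ t, (MvPolynomial.X (s t) : MvPolynomial X k) = 0) :
    ∑ s, φ s * β s = 0 := by
  classical
  let b : (X →₀ ℕ) → k := fun m => if h : ∃ s : Fin d → X, exponent s = m then β h.choose else 0
  have hb : ∀ s, b (exponent s) = β s := by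
    intro s
    have hs : ∃ s' : Fin d → X, exponent s' = exponent s := ⟨s, rfl⟩
    obtain ⟨σ, hσ⟩ := exists_perm_of_exponent_eq hs.choose_spec
    simp only [b, dif_pos hs]
    rw [hσ, hβ]
  have := congrArg ((basisMonomials X k).constr k b) h
  simp only [map_sum, map_zero, prod_X_eq_monomial, ← smul_eq_C_mul, map_smul] at this
  rw [← this]
  refine Finset.sum_congr rfl fun s _ => ?_
  rw [← hb s, smul_eq_mul]
  congr 1
  exact ((basisMonomials X k).constr_basis k b (exponent s)).symm

/-- A symmetric coefficient family is determined by the polynomial function it defines. -/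
theorem symm_eq_zero [Fintype X] [CharZero k] (q : (Fin d → X) → k)
    (hq : ∀ (σ : Equiv.Perm (Fin d)) s, q (s ∘ σ) = q s)
    (h : ∀ z : X → k, ∑ s, q s * ∏ t, z (s t) = 0) : q = 0 := by
  classical
  funext s₀
  have h0 : ∑ s, C (q s) * ∏ t, (MvPolynomial.X (s t) : MvPolynomial X k) = 0 := by
    refine MvPolynomial.funext fun z => ?_
    simpa using h z
  have h1 := sum_mul_eq_zero_of_symm q (fun s => if exponent s = exponent s₀ then 1 else 0)
    (fun σ s => by rw [exponent_comp]) h0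
  have h2 : ∀ s, q s * (if exponent s = exponent s₀ then 1 else 0) =
      if exponent s = exponent s₀ then q s₀ else 0 := by
    intro s
    split_ifs with hs
    · obtain ⟨σ, rfl⟩ := exists_perm_of_exponent_eq hs
      rw [hq, mul_one]
    · exact mul_zero _
  simp only [h2, ← Finset.sum_filter, Finset.sum_const, nsmul_eq_mul, mul_eq_zero,
    Nat.cast_eq_zero, Finset.card_eq_zero, Finset.filter_eq_empty_iff] at h1
  exact h1.resolve_left fun h => h (Finset.mem_univ s₀) rfl

/-- Every homogeneous polynomial is given by a symmetric coefficient family. -/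
theorem exists_symm_coeff [Fintype X] [CharZero k] (P : MvPolynomial X k)
    (hP : P.IsHomogeneous d) :
    ∃ q : (Fin d → X) → k, (∀ (σ : Equiv.Perm (Fin d)) s, q (s ∘ σ) = q s) ∧
      ∀ z : X → k, eval z P = ∑ s, q s * ∏ t, z (s t) := by
  classical
  let N : (X →₀ ℕ) → ℕ := fun m => (Finset.univ.filter fun s : Fin d → X => exponent s = m).card
  refine ⟨fun s => coeff (exponent s) P / N (exponent s), fun σ s => by
    simp only [exponent_comp], fun z => ?_⟩
  have key : P = ∑ s : Fin d → X, C (coeff (exponent s) P / N (exponent s)) *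
      ∏ t, (MvPolynomial.X (s t) : MvPolynomial X k) := by
    ext m
    simp only [prod_X_eq_monomial, coeff_sum, coeff_C_mul, coeff_monomial]
    have : ∀ s : Fin d → X, coeff (exponent s) P / (N (exponent s) : k) *
        (if exponent s = m then 1 else 0) = if exponent s = m then coeff m P / N m else 0 := by
      intro s
      split_ifs with h
      · rw [h, mul_one]
      · exact mul_zero _
    simp only [this, ← Finset.sum_filter, Finset.sum_const, nsmul_eq_mul]
    change coeff m P = (N m : k) * _
    by_cases hm : coeff m P = 0
    · simp [hm]
    · obtain ⟨s, hs⟩ := exists_exponent_eq m (d := d) (by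
        rw [Finsupp.degree_eq_weight_one]
        exact hP hm)
      have : (N m : k) ≠ 0 := Nat.cast_ne_zero.2 (Finset.card_ne_zero_of_mem (a := s) (by simp [hs]))
      field_simp
  conv_lhs => rw [key]
  simp

end SymmetricCoefficients

/-! ### The first fundamental theorem for several matrices -/

section FirstFundamentalTheorem

open MvPolynomial

variable {k n : Type*} [Field k]

/-- The matrix of `g^{⊗d}` acting on tensor space. -/
def tensorPow (d : ℕ) (g : Matrix n n k) : Matrix (Fin d → n) (Fin d → n) k :=
  Matrix.of fun I J => ∏ t, g (I t) (J t)

theorem sum_triples [Fintype n] {B : Type*} [Fintype B] [DecidableEq B] {d : ℕ}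
    (F : (Fin d → B × n × n) → k) :
    ∑ s, F s = ∑ c : Fin d → B, ∑ I : Fin d → n, ∑ J : Fin d → n,
      F fun t => (c t, I t, J t) := by
  simp only [← Fintype.sum_prod_type']
  exact Fintype.sum_equiv ((Equiv.arrowProdEquivProdArrow (Fin d) (fun _ => B)
    (fun _ => n × n)).trans (Equiv.prodCongr (Equiv.refl _)
    (Equiv.arrowProdEquivProdArrow (Fin d) (fun _ => n) (fun _ => n)))) _ _ fun s => rfl

variable [Fintype n] [DecidableEq n]

/-- An operator commuting with `g^{⊗d}` for all invertible `g` commutes with every operator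
that commutes with the symmetric group: invertible matrices are Zariski dense, and the operators
`g^{⊗d}` span those commuting with the symmetric group. -/
theorem mul_comm_of_commute_tensorPow [CharZero k] (d : ℕ) (T : Matrix (Fin d → n) (Fin d → n) k)
    (hT : ∀ g : (Matrix n n k)ˣ, T * tensorPow d (g : Matrix n n k) = tensorPow d g * T)
    (B : Matrix (Fin d → n) (Fin d → n) k)
    (hB : ∀ (σ : Equiv.Perm (Fin d)) I J, B (I ∘ σ) (J ∘ σ) = B I J) : T * B = B * T := by
  rw [← sub_eq_zero]
  ext I₀ J₀
  -- The entry `(I₀, J₀)` of the commutator with `T`, as a linear form in the other matrix.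
  let φ : (Fin d → n × n) → k := fun s =>
    (if (fun t => (s t).2) = J₀ then T I₀ (fun t => (s t).1) else 0) -
      (if (fun t => (s t).1) = I₀ then T (fun t => (s t).2) J₀ else 0)
  have hφ : ∀ M : Matrix (Fin d → n) (Fin d → n) k,
      (T * M - M * T) I₀ J₀ = ∑ s, φ s * M (fun t => (s t).1) (fun t => (s t).2) := by
    intro M
    refine Eq.trans ?_ (Fintype.sum_equiv (Equiv.arrowProdEquivProdArrow (Fin d) (fun _ => n) (fun _ => n)) _
      (fun p : (Fin d → n) × (Fin d → n) => ((if p.2 = J₀ then T I₀ p.1 else 0) -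
        (if p.1 = I₀ then T p.2 J₀ else 0)) * M p.1 p.2) fun s => rfl).symm
    simp only [Fintype.sum_prod_type, sub_mul, ite_mul, zero_mul, Finset.sum_sub_distrib,
      Finset.sum_ite_eq', Finset.mem_univ, if_true, Matrix.sub_apply, Matrix.mul_apply]
    congr 1
    rw [Finset.sum_comm]
    simp [mul_comm]
  have h0 : ∑ s, C (φ s) * ∏ t, (MvPolynomial.X (s t) : MvPolynomial (n × n) k) = 0 := by
    have hdet := Matrix.det_mvPolynomialX_ne_zero n k
    refine (mul_eq_zero.1 ?_).resolve_right hdet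
    refine MvPolynomial.funext fun z => ?_
    let g : Matrix n n k := Matrix.of fun i j => z (i, j)
    have hg : eval z (Matrix.mvPolynomialX n n k).det = g.det := by
      rw [RingHom.map_det]
      congr 1
      ext i j
      simp [g]
    rw [map_mul, hg, map_zero]
    by_cases h : g.det = 0
    · rw [h, mul_zero]
    · have hu : IsUnit g := (Matrix.isUnit_iff_isUnit_det g).2 (isUnit_iff_ne_zero.2 h)
      obtain ⟨u, hu⟩ := hu
      have h1 := hφ (tensorPow d g)
      rw [← hu, hT u, sub_self, hu] at h1
      have h2 : eval z (∑ s, C (φ s) * ∏ t, (MvPolynomial.X (s t) : MvPolynomial (n × n) k)) =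
          0 := by
        rw [← Matrix.zero_apply I₀ J₀, h1]
        simp [tensorPow, g]
      rw [h2, zero_mul]
  rw [hφ, sum_mul_eq_zero_of_symm φ (fun s => B (fun t => (s t).1) (fun t => (s t).2))
    (fun σ s => hB σ (fun t => (s t).1) (fun t => (s t).2)) h0, Matrix.zero_apply]

/-- Substituting linear forms into a polynomial given by a coefficient family. -/
theorem sum_mul_prod_linear {X : Type*} [Fintype X] [DecidableEq X] {d : ℕ}
    (q : (Fin d → X) → k) (L : X → X → k) (z : X → k) :
    ∑ s, q s * ∏ t, (∑ p, L (s t) p * z p) =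
      ∑ s : Fin d → X, (∑ s', q s' * ∏ t, L (s' t) (s t)) * ∏ t, z (s t) := by
  simp only [Finset.prod_univ_sum, Fintype.piFinset_univ, Finset.mul_sum, Finset.sum_mul,
    Finset.prod_mul_distrib]
  rw [Finset.sum_comm]
  simp only [mul_assoc]

theorem prod_boole_eq {α : Type*} [DecidableEq α] {d : ℕ} (a b : Fin d → α) :
    ∏ t, (if a t = b t then (1 : k) else 0) = if a = b then 1 else 0 := by
  simp [Finset.prod_boole, funext_iff]

/-- The coefficient matrices of an invariant homogeneous polynomial commute with `g^{⊗d}`. -/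
theorem coeff_commute_tensorPow [CharZero k] {B : Type*} [Fintype B] [DecidableEq B] {d : ℕ}
    (q : (Fin d → B × n × n) → k) (hq : ∀ (σ : Equiv.Perm (Fin d)) s, q (s ∘ σ) = q s)
    (g : Matrix n n k)
    (hinv : ∀ z : B → Matrix n n k,
      ∑ s, q s * ∏ t, (g * z (s t).1) (s t).2.1 (s t).2.2 =
        ∑ s, q s * ∏ t, (z (s t).1 * g) (s t).2.1 (s t).2.2) (c : Fin d → B) :
    Matrix.of (fun J I => q fun t => (c t, I t, J t)) * tensorPow d g =
      tensorPow d g * Matrix.of (fun J I => q fun t => (c t, I t, J t)) := by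
  -- the linear substitutions `z ↦ g * z` and `z ↦ z * g` on the matrix entries
  let L₁ : B × n × n → B × n × n → k := fun p' p =>
    (if p'.1 = p.1 then 1 else 0) * ((if p'.2.2 = p.2.2 then 1 else 0) * g p'.2.1 p.2.1)
  let L₂ : B × n × n → B × n × n → k := fun p' p =>
    (if p'.1 = p.1 then 1 else 0) * ((if p'.2.1 = p.2.1 then 1 else 0) * g p.2.2 p'.2.2)
  have hsymm : ∀ (L : B × n × n → B × n × n → k) (σ : Equiv.Perm (Fin d)) s,
      ∑ s', q s' * ∏ t, L (s' t) ((s ∘ σ) t) = ∑ s', q s' * ∏ t, L (s' t) (s t) := by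
    intro L σ s
    refine Fintype.sum_equiv (Equiv.arrowCongr σ (Equiv.refl _)) _ _ fun s' => ?_
    have : (Equiv.arrowCongr σ (Equiv.refl (B × n × n))) s' = s' ∘ σ.symm := rfl
    rw [this, hq]
    congr 1
    exact Fintype.prod_equiv σ _ _ fun t => by simp
  have hz := symm_eq_zero (fun s => (∑ s', q s' * ∏ t, L₁ (s' t) (s t)) -
      ∑ s', q s' * ∏ t, L₂ (s' t) (s t)) (fun σ s => by simp only [hsymm]) fun z => by
    simp only [sub_mul, Finset.sum_sub_distrib, ← sum_mul_prod_linear]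
    have h := hinv fun b => Matrix.of fun i j => z (b, i, j)
    rw [sub_eq_zero]
    convert h using 5 with s _ t _ s _ t _
    · simp [L₁, Fintype.sum_prod_type, Matrix.mul_apply]
    · simp [L₂, Fintype.sum_prod_type, Matrix.mul_apply, mul_comm]
  ext J I
  have h := sub_eq_zero.1 (congrFun hz fun t => (c t, I t, J t))
  simp only [sum_triples, L₁, L₂, Finset.prod_mul_distrib, prod_boole_eq] at h
  simpa [Matrix.mul_apply, tensorPow, mul_comm] using h

theorem invariant_mem_of_homogeneous [CharZero k] {B : Type*} [Fintype B] [DecidableEq B] {d : ℕ}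
    (P : MvPolynomial (B × n × n) k) (hhom : P.IsHomogeneous d)
    (hP : ∀ (g : (Matrix n n k)ˣ) (z : B → Matrix n n k),
      eval (fun p => ((g : Matrix n n k) * z p.1 * (↑g⁻¹ : Matrix n n k)) p.2.1 p.2.2) P =
        eval (fun p => z p.1 p.2.1 p.2.2) P)
    {ι : Type*} (X : B → ι → Matrix n n k) (A : Subalgebra k (ι → k))
    (hA : ∀ w : List B, (fun i => ((w.map fun c => X c i).prod).trace) ∈ A) :
    (fun i => eval (fun p => X p.1 i p.2.1 p.2.2) P) ∈ A := by
  obtain ⟨q, hq, hqP⟩ := exists_symm_coeff P hhom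
  have hcomm : ∀ c : Fin d → B, ∃ a : Equiv.Perm (Fin d) → k, ∀ J I : Fin d → n,
      q (fun t => (c t, I t, J t)) = ∑ σ, a σ * if J ∘ σ = I then 1 else 0 := by
    intro c
    refine double_centralizer d (Matrix.of fun J I => q fun t => (c t, I t, J t)) ?_
    refine mul_comm_of_commute_tensorPow d _ fun g => coeff_commute_tensorPow q hq _ ?_ c
    intro z
    have h := hP g fun b => z b * g
    simpa [hqP, mul_assoc] using h
  choose a ha using hcomm
  have hval : (fun i => eval (fun p => X p.1 i p.2.1 p.2.2) P) =
      ∑ c : Fin d → B, ∑ σ, a c σ • fun i => permTrace σ⁻¹ fun t => X (c (σ⁻¹ t)) i := by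
    funext i
    simp only [hqP, sum_triples, ha, Finset.sum_apply, Pi.smul_apply, smul_eq_mul, permTrace]
    refine Finset.sum_congr rfl fun c _ => ?_
    have hJ : ∀ J : Fin d → n, ∑ I : Fin d → n,
        (∑ σ, a c σ * if J ∘ σ = I then 1 else 0) * ∏ t, X (c t) i (I t) (J t) =
          ∑ σ, a c σ * ∏ t, X (c (σ⁻¹ t)) i (J t) (J (σ⁻¹ t)) := by
      intro J
      simp only [Finset.sum_mul]
      rw [Finset.sum_comm]
      refine Finset.sum_congr rfl fun σ _ => ?_
      simp only [mul_ite, mul_one, mul_zero, ite_mul, zero_mul, Finset.sum_ite_eq,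
        Finset.mem_univ, if_true]
      congr 1
      exact Fintype.prod_equiv σ _ _ fun t => by simp
    rw [Finset.sum_comm]
    simp only [hJ, Finset.mul_sum]
    exact Finset.sum_comm
  rw [hval]
  refine A.sum_mem fun c _ => A.sum_mem fun σ _ => A.smul_mem ?_ _
  refine permTrace_mem A {m | ∃ w : List B, m = fun i => (w.map fun c => X c i).prod} ?_ ?_ _ _
    (fun t => X (c (σ⁻¹ t))) ?_
  · rintro _ ⟨w, rfl⟩ _ ⟨w', rfl⟩
    exact ⟨w ++ w', by funext i; simp⟩
  · rintro _ ⟨w, rfl⟩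
    exact hA w
  · exact fun t => ⟨[c (σ⁻¹ t)], by funext i; simp⟩

/-- **First fundamental theorem for several matrices**: a polynomial invariant under simultaneous
conjugation is a polynomial in traces of words. -/
theorem invariant_mem [CharZero k] {B : Type*} [Fintype B] [DecidableEq B]
    (P : MvPolynomial (B × n × n) k)
    (hP : ∀ (g : (Matrix n n k)ˣ) (z : B → Matrix n n k),
      eval (fun p => ((g : Matrix n n k) * z p.1 * (↑g⁻¹ : Matrix n n k)) p.2.1 p.2.2) P =
        eval (fun p => z p.1 p.2.1 p.2.2) P)
    {ι : Type*} (X : B → ι → Matrix n n k) (A : Subalgebra k (ι → k))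
    (hA : ∀ w : List B, (fun i => ((w.map fun c => X c i).prod).trace) ∈ A) :
    (fun i => eval (fun p => X p.1 i p.2.1 p.2.2) P) ∈ A := by
  have hscale : ∀ (t : k) (z : B × n × n → k),
      eval (fun p => t * z p) P = ∑ d ∈ Finset.range (P.totalDegree + 1),
        t ^ d * eval z (homogeneousComponent d P) := by
    intro t z
    conv_lhs => rw [← sum_homogeneousComponent P]
    rw [map_sum]
    refine Finset.sum_congr rfl fun d _ => ?_
    obtain ⟨q, -, hq⟩ := exists_symm_coeff _ (homogeneousComponent_isHomogeneous d P)
    simp [hq, Finset.prod_mul_distrib, Finset.mul_sum, mul_left_comm]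
  have hcomp : ∀ d, (fun i => eval (fun p => X p.1 i p.2.1 p.2.2) (homogeneousComponent d P)) ∈
      A := by
    intro d
    by_cases hd : d ∈ Finset.range (P.totalDegree + 1)
    swap
    · have hP0 := homogeneousComponent_eq_zero d P (by simpa [Nat.lt_succ_iff] using hd)
      simp only [hP0, map_zero]
      exact A.zero_mem
    refine invariant_mem_of_homogeneous _ (homogeneousComponent_isHomogeneous d P) ?_ X A hA
    intro g z
    let w : B → Matrix n n k := fun b => (g : Matrix n n k) * z b * (↑g⁻¹ : Matrix n n k)
    -- Comparing the coefficients of the powers of `t` in `P (t • g z g⁻¹) = P (t • z)`.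
    have h0 : ∑ d ∈ Finset.range (P.totalDegree + 1), Polynomial.C
        (eval (fun p => w p.1 p.2.1 p.2.2) (homogeneousComponent d P) -
          eval (fun p => z p.1 p.2.1 p.2.2) (homogeneousComponent d P)) * Polynomial.X ^ d = 0 := by
      refine Polynomial.funext fun t => ?_
      have h1 := hscale t fun p => w p.1 p.2.1 p.2.2
      have h2 := hscale t fun p => z p.1 p.2.1 p.2.2
      have h3 := hP g fun b => t • z b
      simp only [Matrix.mul_smul, Matrix.smul_mul, Matrix.smul_apply, smul_eq_mul] at h3
      rw [h2] at h3
      rw [h3] at h1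
      simp only [Polynomial.eval_finsetSum, Polynomial.eval_mul, Polynomial.eval_C,
        Polynomial.eval_pow, Polynomial.eval_X, sub_mul, Finset.sum_sub_distrib,
        Polynomial.eval_zero, sub_eq_zero]
      simpa only [mul_comm] using h1.symm
    have h4 := congrArg (fun R => Polynomial.coeff R d) h0
    simp only [Polynomial.finsetSum_coeff, Polynomial.coeff_C_mul_X_pow, Finset.sum_ite_eq, hd,
      if_true, Polynomial.coeff_zero] at h4
    exact sub_eq_zero.1 h4
  have : (fun i => eval (fun p => X p.1 i p.2.1 p.2.2) P) =
      ∑ d ∈ Finset.range (P.totalDegree + 1),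
        fun i => eval (fun p => X p.1 i p.2.1 p.2.2) (homogeneousComponent d P) := by
    funext i
    conv_lhs => rw [← sum_homogeneousComponent P]
    simp
  rw [this]
  exact A.sum_mem fun d _ => hcomp d

end FirstFundamentalTheorem

/-! ### Pairs of traceless `3 × 3` matrices -/

/-- First fundamental theorem for pairs of traceless 3×3 matrices under simultaneous
conjugation: every conjugation-invariant polynomial function `f` on pairs of traceless
3×3 matrices lies in the subalgebra generated by the nine functions `tr(x²)`, `tr(xy)`,
`tr(y²)`, `tr(x³)`, `tr(x²y)`, `tr(xy²)`, `tr(y³)`, `v = tr(x²y²) - tr(xyxy)` and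
`w = tr(x²y²xy) - tr(y²x²yx)`. -/
theorem stmt_14 {k : Type*} [Field k] [CharZero k]
    (f : {x : Matrix (Fin 3) (Fin 3) k // Matrix.trace x = 0} →
         {x : Matrix (Fin 3) (Fin 3) k // Matrix.trace x = 0} → k)
    (hpoly : ∃ P : MvPolynomial (Fin 2 × Fin 3 × Fin 3) k,
      ∀ x y : {x : Matrix (Fin 3) (Fin 3) k // Matrix.trace x = 0},
        f x y = MvPolynomial.eval
          (fun p : Fin 2 × Fin 3 × Fin 3 =>
            if p.1 = 0 then x.1 p.2.1 p.2.2 else y.1 p.2.1 p.2.2) P)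
    (hinv : ∀ (g : (Matrix (Fin 3) (Fin 3) k)ˣ)
        (x y : {x : Matrix (Fin 3) (Fin 3) k // Matrix.trace x = 0}),
      f ⟨(g : Matrix (Fin 3) (Fin 3) k) * x.1 * (↑g⁻¹ : Matrix (Fin 3) (Fin 3) k),
          (Matrix.trace_units_conj g x.1).trans x.2⟩
        ⟨(g : Matrix (Fin 3) (Fin 3) k) * y.1 * (↑g⁻¹ : Matrix (Fin 3) (Fin 3) k),
          (Matrix.trace_units_conj g y.1).trans y.2⟩ = f x y) :
    f ∈ Algebra.adjoin k
      ({fun x y => Matrix.trace (x.1 * x.1),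
        fun x y => Matrix.trace (x.1 * y.1),
        fun x y => Matrix.trace (y.1 * y.1),
        fun x y => Matrix.trace (x.1 * x.1 * x.1),
        fun x y => Matrix.trace (x.1 * x.1 * y.1),
        fun x y => Matrix.trace (x.1 * y.1 * y.1),
        fun x y => Matrix.trace (y.1 * y.1 * y.1),
        fun x y => Matrix.trace (x.1 * x.1 * y.1 * y.1)
          - Matrix.trace (x.1 * y.1 * x.1 * y.1),
        fun x y => Matrix.trace (x.1 * x.1 * y.1 * y.1 * x.1 * y.1)
          - Matrix.trace (y.1 * y.1 * x.1 * x.1 * y.1 * x.1)} :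
        Set ({x : Matrix (Fin 3) (Fin 3) k // Matrix.trace x = 0} →
             {x : Matrix (Fin 3) (Fin 3) k // Matrix.trace x = 0} → k)) := by
  classical
  let T := {x : Matrix (Fin 3) (Fin 3) k // Matrix.trace x = 0}
  obtain ⟨P, hP⟩ := hpoly
  have h3 : (3 : k) ≠ 0 := by norm_num
  -- The projection to traceless matrices extends `f` to a polynomial function on all pairs.
  let pr : Matrix (Fin 3) (Fin 3) k → T := fun z => ⟨z - (z.trace / 3) • 1, by
    simp [Matrix.trace_sub, Matrix.trace_smul, h3]⟩
  have hpr : ∀ x : T, pr x.1 = x := fun x => Subtype.ext (by simp [pr, x.2])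
  let Q : MvPolynomial (Bool × Fin 3 × Fin 3) k := MvPolynomial.aeval (fun p =>
    MvPolynomial.X (decide (p.1 = 0), p.2.1, p.2.2) - if p.2.1 = p.2.2 then
      MvPolynomial.C (1 / 3) * ∑ l, MvPolynomial.X (decide (p.1 = 0), l, l) else 0) P
  have hQ : ∀ z : Bool → Matrix (Fin 3) (Fin 3) k,
      MvPolynomial.eval (fun p => z p.1 p.2.1 p.2.2) Q = f (pr (z true)) (pr (z false)) := by
    intro z
    rw [hP, ← MvPolynomial.coe_aeval_eq_eval, RingHom.coe_coe, ← AlgHom.comp_apply,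
      MvPolynomial.comp_aeval, MvPolynomial.aeval_eq_eval]
    congr 2
    funext p
    by_cases hp : p.1 = 0 <;> by_cases hij : p.2.1 = p.2.2 <;>
      simp [hp, hij, pr, Matrix.trace, div_eq_inv_mul]
  have hconj : ∀ (g : (Matrix (Fin 3) (Fin 3) k)ˣ) (z : Matrix (Fin 3) (Fin 3) k),
      pr ((g : Matrix (Fin 3) (Fin 3) k) * z * (↑g⁻¹ : Matrix (Fin 3) (Fin 3) k)) =
        ⟨(g : Matrix (Fin 3) (Fin 3) k) * (pr z).1 * (↑g⁻¹ : Matrix (Fin 3) (Fin 3) k),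
          (Matrix.trace_units_conj g (pr z).1).trans (pr z).2⟩ := by
    intro g z
    refine Subtype.ext ?_
    simp only [pr, Matrix.trace_units_conj]
    simp [mul_sub, sub_mul]
  let curry : (T × T → k) →ₐ[k] (T → T → k) :=
    { toFun := fun h x y => h (x, y)
      map_one' := rfl
      map_mul' := fun _ _ => rfl
      map_zero' := rfl
      map_add' := fun _ _ => rfl
      commutes' := fun _ => rfl }
  let X : Bool → T × T → Matrix (Fin 3) (Fin 3) k := fun c p => if c then p.1.1 else p.2.1
  suffices h : ∀ A : Subalgebra k (T → T → k), _ ⊆ (A : Set (T → T → k)) → f ∈ A from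
    h _ Algebra.subset_adjoin
  intro A hA
  simp only [Set.insert_subset_iff, Set.singleton_subset_iff, SetLike.mem_coe] at hA
  obtain ⟨hxx, hxy, hyy, hxxx, hxxy, hxyy, hyyy, hv, hw⟩ := hA
  have hX : ∀ c i, (X c i).trace = 0 := by
    rintro (_ | _) ⟨x, y⟩
    exacts [y.2, x.2]
  have hcurry : ∀ (F : T → T → k) (h : T × T → k), F ∈ A → (∀ x y, h (x, y) = F x y) →
      h ∈ A.comap curry := fun F h hF hh =>
    Subalgebra.mem_comap A curry h |>.2 ((funext₂ hh : curry h = F) ▸ hF)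
  have hwords := wordTr_mem X hX (A.comap curry) ?_ ?_ ?_ ?_
  · have h := (Subalgebra.mem_comap _ _ _).1 (invariant_mem Q (fun g z =>
      ((hQ fun b => (g : Matrix (Fin 3) (Fin 3) k) * z b * (↑g⁻¹ : Matrix (Fin 3) (Fin 3) k)).trans
        (by rw [hconj, hconj, hinv])).trans (hQ z).symm) X (A.comap curry) hwords)
    convert h using 1
    funext x y
    refine Eq.trans ?_ (hQ fun c => X c (x, y)).symm
    simp [X, hpr]
  · have h : wordTr X [true, false] ∈ A.comap curry :=
      hcurry _ _ hxy fun _ _ => by simp [wordTr, wordVal, X]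
    intro w hlen
    obtain ⟨a, b, rfl⟩ := List.length_eq_two.1 hlen
    rcases a with _ | _ <;> rcases b with _ | _
    · exact hcurry _ _ hyy fun _ _ => by simp [wordTr, wordVal, X]
    · exact wordTr_append_comm X [true] [false] ▸ h
    · exact h
    · exact hcurry _ _ hxx fun _ _ => by simp [wordTr, wordVal, X]
  · have h : wordTr X [true, true, false] ∈ A.comap curry :=
      hcurry _ _ hxxy fun _ _ => by simp [wordTr, wordVal, X, mul_assoc]
    have h' : wordTr X [true, false, false] ∈ A.comap curry :=
      hcurry _ _ hxyy fun _ _ => by simp [wordTr, wordVal, X, mul_assoc]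
    intro w hlen
    obtain ⟨a, b, c, rfl⟩ := List.length_eq_three.1 hlen
    rcases a with _ | _ <;> rcases b with _ | _ <;> rcases c with _ | _
    · exact hcurry _ _ hyyy fun _ _ => by simp [wordTr, wordVal, X, mul_assoc]
    · exact wordTr_append_comm X [true] [false, false] ▸ h'
    · exact wordTr_append_comm X [true, false] [false] ▸ h'
    · exact wordTr_append_comm X [true, true] [false] ▸ h
    · exact h'
    · exact wordTr_append_comm X [true] [true, false] ▸ h
    · exact h
    · exact hcurry _ _ hxxx fun _ _ => by simp [wordTr, wordVal, X, mul_assoc]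
  · exact hcurry _ _ hv fun _ _ => by simp [wordTr, wordVal, X, mul_assoc]
  · exact hcurry _ _ hw fun _ _ => by simp [wordTr, wordVal, X, mul_assoc]
end
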